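/- arXiv:2605.18598 — 2 statements merged into one kernel-verified Lean document; each statement's English description precedes it below -/
import Mathlib

section
/- Riemannian Dimension Bound for DNN (Theorem). There is an absolute constant C > 0 with the following property. Consider a fully connected network of depth L with 1-Lipschitz columnwise activations σ_1,…,σ_L, input matrix X ∈ ℝ^{d_0×n}, and weight class B_F(R) := {W : ‖W‖_F ≤ R}. Suppose M_{l→L} : B_F(R) × (0,∞) → [0,∞) (l = 1,…,L) satisfy the local Lipschitz property: for every W ∈ B_F(R), every ε > 0, every W' ∈ B_F(R) with ρ_n(W,W') ≤ ε, and every l, the outer map G_l^{W'}(A) := σ_L(W'_L·σ_{L−1}(⋯σ_{l+1}(W'_{l+1}·A)⋯)) (the identity when l = L) satisfies ‖G_l^{W'}(σ_l(W'_l F_{l−1}(W,X))) − G_l^{W'}(σ_l(W_l F_{l−1}(W,X)))‖_F ≤ M_{l→L}(W,ε)·‖σ_l(W'_l F_{l−1}(W,X)) − σ_l(W_l F_{l−1}(W,X))‖_F. Then there exists a probability measure π on the space of weight tuples such that for every W with ‖W‖_F ≤ R and every ε > 0: log( 1 / π{ W' : ρ_n(W,W') ≤ ε } ) ≤ d_R(W,ε)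 := Σ_{l=1}^L [ d_l·d_eff(A_l(W,ε), ρ̂(W), ε) + d_{l−1}·d_eff(A_l(W,ε), ρ̂(W), ε) + log d_{l−1} + log n ], where A_l(W,ε) := L·M_{l→L}(W,ε)²·F_{l−1}(W,X)·F_{l−1}(W,X)ᵀ and ρ̂(W) := C·max{‖W‖_F, R/2ⁿ}. -/
open MeasureTheory
open scoped ENNReal NNReal Matrix

noncomputable section

/-- The pointwise dimension `log(1/p)` of a (probability) mass `p`, valued in `[0,∞]`,
with the convention `log(1/0) = ∞`. -/
def negLog (p : ℝ≥0∞) : ℝ≥0∞ :=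
  if p = 0 then ⊤ else ENNReal.ofReal (Real.log (1 / p.toReal))

/-- Squared Frobenius norm of a real matrix. -/
def frobSq {m k : Type*} [Fintype m] [Fintype k] (M : Matrix m k ℝ) : ℝ :=
  ∑ i, ∑ j, M i j ^ 2

/-- Apply a map `g : ℝ^m → ℝ^m` columnwise to a matrix. -/
def mapCols {m k : Type*} [Fintype m] [Fintype k] (g : (m → ℝ) → m → ℝ)
    (M : Matrix m k ℝ) : Matrix m k ℝ :=
  Matrix.of fun i j => g (fun i' => M i' j) i

/-- Weight tuples of a fully connected network with widths `d 0, d 1, d 2, …`. -/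
def Weights (d : ℕ → ℕ) : Type :=
  (l : ℕ) → Matrix (Fin (d (l + 1))) (Fin (d l)) ℝ

instance {m n : Type*} : MeasurableSpace (Matrix m n ℝ) :=
  (inferInstance : MeasurableSpace (m → n → ℝ))

instance (d : ℕ → ℕ) : MeasurableSpace (Weights d) :=
  (inferInstance : MeasurableSpace ((l : ℕ) → Matrix (Fin (d (l + 1))) (Fin (d l)) ℝ))

/-- The feature matrices of the network: `F_0 = X`, `F_{l+1} = σ_l(W_l F_l)`. -/
def feat (d : ℕ → ℕ) (nn : ℕ) (σ : (l : ℕ) → ((Fin (d (l + 1)) → ℝ) → Fin (d (l + 1)) → ℝ))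
    (W : Weights d) (X : Matrix (Fin (d 0)) (Fin nn) ℝ) :
    (l : ℕ) → Matrix (Fin (d l)) (Fin nn) ℝ
  | 0 => X
  | l + 1 => mapCols (σ l) (W l * feat d nn σ W X l)

/-- Propagation of an arbitrary matrix `A` (sitting at layer `start`) through the network. -/
def iterNet (d : ℕ → ℕ) (nn : ℕ) (σ : (l : ℕ) → ((Fin (d (l + 1)) → ℝ) → Fin (d (l + 1)) → ℝ))
    (W : Weights d) (start : ℕ) (A : Matrix (Fin (d start)) (Fin nn) ℝ) :
    (k : ℕ) → Matrix (Fin (d (start + k))) (Fin nn) ℝ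
  | 0 => A
  | k + 1 => mapCols (σ (start + k)) (W (start + k) * iterNet d nn σ W start A k)

/-- The empirical network metric `ρ_n(W,W') = ‖F_L(W,X) − F_L(W',X)‖_F / √n`. -/
def rhoN (d : ℕ → ℕ) (L nn : ℕ) (σ : (l : ℕ) → ((Fin (d (l + 1)) → ℝ) → Fin (d (l + 1)) → ℝ))
    (X : Matrix (Fin (d 0)) (Fin nn) ℝ) (W W' : Weights d) : ℝ :=
  Real.sqrt (frobSq (feat d nn σ W X L - feat d nn σ W' X L) / nn)

/-- The Frobenius norm `‖W‖_F = (Σ_{l<L} ‖W_l‖_F²)^{1/2}` of a weight tuple with `L` layers. -/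
def wNorm (d : ℕ → ℕ) (L : ℕ) (W : Weights d) : ℝ :=
  Real.sqrt (∑ l ∈ Finset.range L, frobSq (W l))

/-- The eigenvalues of a symmetric real matrix, listed in nonincreasing order with
multiplicity (junk value `0` if the matrix is not symmetric). -/
def eigDesc {m : ℕ} (G : Matrix (Fin m) (Fin m) ℝ) : Fin m → ℝ :=
  if h : G.IsHermitian then (fun k => (h.eigenvalues ∘ Tuple.sort h.eigenvalues) k.rev) else 0

/-- Effective dimension `d_eff(G,R,ε) = (1/2) Σ_{k=1}^{r_eff(G,R,ε)} log(8R²λ_k(G)/(nε²))`,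
where `r_eff(G,R,ε) = max{k : λ_k(G)·R² ≥ nε²/2}`. -/
def dEff {m : ℕ} (G : Matrix (Fin m) (Fin m) ℝ) (R : ℝ) (n : ℕ) (ε : ℝ) : ℝ :=
  (1 / 2) *
    ∑ k ∈ Finset.univ.filter (fun k : Fin m => (n : ℝ) * ε ^ 2 / 2 ≤ eigDesc G k * R ^ 2),
      Real.log (8 * R ^ 2 * eigDesc G k / (n * ε ^ 2))

section netpart

attribute [local instance] Matrix.frobeniusNormedAddCommGroup Matrix.frobeniusNormedSpace

lemma sqrt_frobSq {m k : Type*} [Fintype m] [Fintype k] (A : Matrix m k ℝ) :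
    Real.sqrt (frobSq A) = ‖A‖ := by
  rw [Matrix.frobenius_norm_def, Real.sqrt_eq_rpow]
  simp [frobSq]

lemma frobSq_nonneg {m k : Type*} [Fintype m] [Fintype k] (A : Matrix m k ℝ) :
    0 ≤ frobSq A :=
  Finset.sum_nonneg fun i _ => Finset.sum_nonneg fun j _ => sq_nonneg _

lemma frobSq_smul {m k : Type*} [Fintype m] [Fintype k] (t : ℝ) (A : Matrix m k ℝ) :
    frobSq (t • A) = t ^ 2 * frobSq A := by
  simp [frobSq, Finset.mul_sum, mul_pow]

lemma frobSq_mapCols {m k : Type*} [Fintype m] [Fintype k] (g : (m → ℝ) → m → ℝ)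
    (hg : ∀ u v : m → ℝ, ∑ i, (g u i - g v i) ^ 2 ≤ ∑ i, (u i - v i) ^ 2)
    (A B : Matrix m k ℝ) : frobSq (mapCols g A - mapCols g B) ≤ frobSq (A - B) := by
  unfold frobSq
  rw [Finset.sum_comm, Finset.sum_comm (f := fun i j => (A - B) i j ^ 2)]
  refine Finset.sum_le_sum fun j _ => ?_
  simpa [mapCols] using hg (fun i => A i j) (fun i => B i j)

variable {d : ℕ → ℕ} {nn : ℕ} {σ : (l : ℕ) → ((Fin (d (l + 1)) → ℝ) → Fin (d (l + 1)) → ℝ)}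

lemma step_heq (W : Weights d) {a b : ℕ} (h : a = b) (X : Matrix (Fin (d a)) (Fin nn) ℝ)
    (Y : Matrix (Fin (d b)) (Fin nn) ℝ) (hXY : HEq X Y) :
    HEq (mapCols (σ a) (W a * X)) (mapCols (σ b) (W b * Y)) := by
  subst h
  rw [eq_of_heq hXY]

lemma frobSq_heq {a b : ℕ} (h : a = b) (X X' : Matrix (Fin (d a)) (Fin nn) ℝ)
    (Y Y' : Matrix (Fin (d b)) (Fin nn) ℝ) (h1 : HEq X Y) (h2 : HEq X' Y') :
    frobSq (X - X') = frobSq (Y - Y') := by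
  subst h
  rw [eq_of_heq h1, eq_of_heq h2]

lemma iterNet_succ (W : Weights d) (j : ℕ) (A : Matrix (Fin (d j)) (Fin nn) ℝ) (k : ℕ) :
    HEq (iterNet d nn σ W j A (k + 1))
      (iterNet d nn σ W (j + 1) (mapCols (σ j) (W j * A)) k) := by
  induction k with
  | zero => exact HEq.rfl
  | succ k ih =>
    exact step_heq (σ := σ) W (by omega) _ _ ih

lemma iterNet_zero (W : Weights d) (X : Matrix (Fin (d 0)) (Fin nn) ℝ) (k : ℕ) :
    HEq (iterNet d nn σ W 0 X k) (feat d nn σ W X k) := by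
  induction k with
  | zero => exact HEq.rfl
  | succ k ih => exact step_heq (σ := σ) W (by omega) _ _ ih

/-- hybrid network. -/
def hyb (d : ℕ → ℕ) (nn : ℕ) (σ : (l : ℕ) → ((Fin (d (l + 1)) → ℝ) → Fin (d (l + 1)) → ℝ))
    (W W' : Weights d) (X : Matrix (Fin (d 0)) (Fin nn) ℝ) (L j : ℕ) :
    Matrix (Fin (d L)) (Fin nn) ℝ :=
  if h : j + (L - j) = L then
    cast (by rw [h]) (iterNet d nn σ W' j (feat d nn σ W X j) (L - j)) else 0

lemma hyb_heq (W W' : Weights d) (X : Matrix (Fin (d 0)) (Fin nn) ℝ) (L j : ℕ) (hj : j ≤ L) :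
    HEq (hyb d nn σ W W' X L j) (iterNet d nn σ W' j (feat d nn σ W X j) (L - j)) := by
  unfold hyb
  rw [dif_pos (by omega)]
  exact cast_heq _ _

lemma hyb_zero (W W' : Weights d) (X : Matrix (Fin (d 0)) (Fin nn) ℝ) (L : ℕ) :
    hyb d nn σ W W' X L 0 = feat d nn σ W' X L := by
  apply eq_of_heq
  refine (hyb_heq W W' X L 0 (Nat.zero_le _)).trans ?_
  exact iterNet_zero W' X L

lemma hyb_last (W W' : Weights d) (X : Matrix (Fin (d 0)) (Fin nn) ℝ) (L : ℕ) :
    hyb d nn σ W W' X L L = feat d nn σ W X L := by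
  apply eq_of_heq
  refine (hyb_heq W W' X L L le_rfl).trans ?_
  rw [Nat.sub_self]
  exact HEq.rfl

lemma hyb_sub (W W' : Weights d) (X : Matrix (Fin (d 0)) (Fin nn) ℝ) (L j : ℕ) (hj : j < L) :
    frobSq (hyb d nn σ W W' X L j - hyb d nn σ W W' X L (j + 1)) =
      frobSq (iterNet d nn σ W' (j + 1)
                  (mapCols (σ j) (W' j * feat d nn σ W X j)) (L - (j + 1)) -
                iterNet d nn σ W' (j + 1)
                  (mapCols (σ j) (W j * feat d nn σ W X j)) (L - (j + 1))) := by
  refine frobSq_heq (by omega) _ _ _ _ ?_ (hyb_heq W W' X L (j+1) hj)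
  refine (hyb_heq W W' X L j hj.le).trans ?_
  have : L - j = (L - (j + 1)) + 1 := by omega
  rw [this]
  exact iterNet_succ _ _ _ _

lemma tele (W W' : Weights d) (X : Matrix (Fin (d 0)) (Fin nn) ℝ) (L : ℕ) :
    Real.sqrt (frobSq (feat d nn σ W X L - feat d nn σ W' X L)) ≤
      ∑ j ∈ Finset.range L, Real.sqrt (frobSq
              (iterNet d nn σ W' (j + 1)
                  (mapCols (σ j) (W' j * feat d nn σ W X j)) (L - (j + 1)) -
                iterNet d nn σ W' (j + 1)
                  (mapCols (σ j) (W j * feat d nn σ W X j)) (L - (j + 1)))) := by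
  rw [← hyb_last W W' X L, ← hyb_zero W W' X L, sqrt_frobSq, norm_sub_rev,
    ← Finset.sum_range_sub']
  refine (norm_sum_le _ _).trans (Finset.sum_le_sum fun j hj => ?_)
  rw [← sqrt_frobSq, hyb_sub W W' X L j (Finset.mem_range.1 hj)]

lemma cont_of_lip {m : ℕ} (g : (Fin m → ℝ) → Fin m → ℝ)
    (hg : ∀ u v : Fin m → ℝ, ∑ i, (g u i - g v i) ^ 2 ≤ ∑ i, (u i - v i) ^ 2) :
    Continuous g := by
  refine continuous_pi fun i => ?_
  rw [continuous_iff_continuousAt]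
  intro u
  have h0 : Filter.Tendsto (fun v => Real.sqrt (∑ i, (v i - u i) ^ 2)) (nhds u) (nhds 0) := by
    have : Continuous (fun v : Fin m → ℝ => Real.sqrt (∑ i, (v i - u i) ^ 2)) := by fun_prop
    have h := this.tendsto u
    simpa using h
  rw [ContinuousAt, tendsto_iff_dist_tendsto_zero]
  refine squeeze_zero (fun _ => dist_nonneg) (fun v => ?_) h0
  rw [Real.dist_eq]
  apply Real.abs_le_sqrt
  refine le_trans ?_ (hg v u)
  exact Finset.single_le_sum (f := fun i => (g v i - g u i) ^ 2) (fun i _ => sq_nonneg _)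
    (Finset.mem_univ i)

/-- segment -/
def seg (W W' : Weights d) (t : ℝ) : Weights d := fun l => W l + t • (W' l - W l)

lemma seg_norm (W W' : Weights d) (L : ℕ) (R t : ℝ) (hR : 0 ≤ R) (h0 : 0 ≤ t) (h1 : t ≤ 1)
    (hW : wNorm d L W ≤ R) (hW' : wNorm d L W' ≤ R) : wNorm d L (seg W W' t) ≤ R := by
  unfold wNorm at *
  rw [Real.sqrt_le_left hR] at *
  have : ∑ l ∈ Finset.range L, frobSq (seg W W' t l) ≤
      (1 - t) * ∑ l ∈ Finset.range L, frobSq (W l) + t * ∑ l ∈ Finset.range L, frobSq (W' l) := by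
    rw [Finset.mul_sum, Finset.mul_sum, ← Finset.sum_add_distrib]
    refine Finset.sum_le_sum fun l _ => ?_
    unfold frobSq
    simp only [Finset.mul_sum]
    rw [← Finset.sum_add_distrib]
    refine Finset.sum_le_sum fun i _ => ?_
    rw [← Finset.sum_add_distrib]
    refine Finset.sum_le_sum fun j _ => ?_
    simp only [seg, Matrix.add_apply, Matrix.smul_apply, Matrix.sub_apply, smul_eq_mul]
    nlinarith [mul_nonneg (mul_nonneg h0 (sub_nonneg.2 h1)) (sq_nonneg (W l i j - W' l i j))]
  nlinarith

lemma seg_cont (hσ : ∀ (l : ℕ) (u v : Fin (d (l + 1)) → ℝ),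
        ∑ i, (σ l u i - σ l v i) ^ 2 ≤ ∑ i, (u i - v i) ^ 2) (W W' : Weights d)
    (X : Matrix (Fin (d 0)) (Fin nn) ℝ) (l : ℕ) :
    ∀ i j, Continuous (fun t => feat d nn σ (seg W W' t) X l i j) := by
  induction l with
  | zero => intro i j; exact continuous_const
  | succ l ih =>
    intro i j
    have hc := cont_of_lip _ (hσ l)
    simp only [feat, mapCols, Matrix.of_apply]
    refine (continuous_apply i).comp (hc.comp (continuous_pi fun i' => ?_))
    simp only [Matrix.mul_apply]
    refine continuous_finset_sum _ fun k _ => Continuous.mul ?_ (ih k j)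
    simp only [seg, Matrix.add_apply, Matrix.smul_apply, smul_eq_mul]
    fun_prop

lemma net_good (L : ℕ) (hn : 1 ≤ nn)
    (hσ : ∀ (l : ℕ) (u v : Fin (d (l + 1)) → ℝ),
        ∑ i, (σ l u i - σ l v i) ^ 2 ≤ ∑ i, (u i - v i) ^ 2)
    (X : Matrix (Fin (d 0)) (Fin nn) ℝ) (R : ℝ) (hR : 0 < R) (M : ℕ → ℝ) (hM : ∀ l, 0 ≤ M l)
    (W : Weights d) (hW : wNorm d L W ≤ R) (ε : ℝ) (hε : 0 < ε)
    (hLip : ∀ W' : Weights d, wNorm d L W' ≤ R → rhoN d L nn σ X W W' ≤ ε → ∀ j, j < L →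
          Real.sqrt (frobSq
              (iterNet d nn σ W' (j + 1)
                  (mapCols (σ j) (W' j * feat d nn σ W X j)) (L - (j + 1)) -
                iterNet d nn σ W' (j + 1)
                  (mapCols (σ j) (W j * feat d nn σ W X j)) (L - (j + 1)))) ≤
            M j * Real.sqrt (frobSq
              (mapCols (σ j) (W' j * feat d nn σ W X j) -
                mapCols (σ j) (W j * feat d nn σ W X j))))
    (W' : Weights d) (hW' : wNorm d L W' ≤ R)
    (hsum : ∑ j ∈ Finset.range L, M j * Real.sqrt (frobSq ((W' j - W j) * feat d nn σ W X j)) ≤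
      Real.sqrt nn * ε) : rhoN d L nn σ X W W' ≤ ε := by
  have hn' : (0:ℝ) < nn := by exact_mod_cast hn
  have key : ∀ t : ℝ, 0 ≤ t → t ≤ 1 → rhoN d L nn σ X W (seg W W' t) ≤ ε →
      rhoN d L nn σ X W (seg W W' t) ≤ t * ε := by
    intro t h0 h1 h
    have hs := seg_norm W W' L R t hR.le h0 h1 hW hW'
    unfold rhoN
    rw [Real.sqrt_div (frobSq_nonneg _), div_le_iff₀ (Real.sqrt_pos.2 hn')]
    refine (tele _ _ _ _).trans ?_
    calc _ ≤ ∑ j ∈ Finset.range L, t * (M j * Real.sqrt (frobSq ((W' j - W j) * feat d nn σ W X j))) := by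
          refine Finset.sum_le_sum fun j hj => ?_
          refine (hLip _ hs h j (Finset.mem_range.1 hj)).trans ?_
          have : Real.sqrt (frobSq
              (mapCols (σ j) (seg W W' t j * feat d nn σ W X j) -
                mapCols (σ j) (W j * feat d nn σ W X j))) ≤
              t * Real.sqrt (frobSq ((W' j - W j) * feat d nn σ W X j)) := by
            rw [← Real.sqrt_sq h0, ← Real.sqrt_mul (sq_nonneg _), ← frobSq_smul, Real.sqrt_sq h0]
            refine Real.sqrt_le_sqrt ((frobSq_mapCols _ (hσ j) _ _).trans (le_of_eq ?_))
            rw [← Matrix.sub_mul]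
            simp [seg]
          calc _ ≤ M j * (t * Real.sqrt (frobSq ((W' j - W j) * feat d nn σ W X j))) :=
                mul_le_mul_of_nonneg_left this (hM j)
            _ = _ := by ring
      _ = t * ∑ j ∈ Finset.range L, (M j * Real.sqrt (frobSq ((W' j - W j) * feat d nn σ W X j))) := by
          rw [Finset.mul_sum]
      _ ≤ t * (Real.sqrt nn * ε) := mul_le_mul_of_nonneg_left hsum h0
      _ = _ := by ring
  have hcont : Continuous (fun t => rhoN d L nn σ X W (seg W W' t)) := by
    unfold rhoN frobSq
    refine Real.continuous_sqrt.comp (Continuous.div_const ?_ _)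
    refine continuous_finset_sum _ fun i _ => continuous_finset_sum _ fun j _ => ?_
    simp only [Matrix.sub_apply]
    exact (continuous_const.sub (seg_cont hσ W W' X L i j)).pow 2
  have hseg0 : seg W W' 0 = W := by funext l; simp [seg]
  have hseg1 : seg W W' 1 = W' := by funext l; simp [seg]
  by_contra hcon
  push Not at hcon
  have h0 : rhoN d L nn σ X W (seg W W' 0) ≤ ε := by
    rw [hseg0]; simp [rhoN, frobSq]; exact hε.le
  have h1 : ε ≤ rhoN d L nn σ X W (seg W W' 1) := by rw [hseg1]; exact hcon.le
  obtain ⟨t, ⟨ht0, ht1⟩, ht⟩ := intermediate_value_Icc (zero_le_one) hcont.continuousOn ⟨h0, h1⟩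
  have h2 := key t ht0 ht1 (le_of_eq ht)
  simp only at ht
  rw [ht] at h2
  have : t = 1 := by nlinarith
  rw [this, hseg1] at ht
  linarith

end netpart

lemma half_mass {α : Type*} [Fintype α] [DecidableEq α] (K : Set (α → ℝ)) (hK : MeasurableSet K)
    (hsym : ∀ x ∈ K, -x ∈ K) (h0 : volume K ≠ 0) (ht : volume K ≠ ⊤) (c : α → ℝ)
    (T : Matrix α α ℝ) (f : (α → ℝ) → ℝ) (hf : ∀ b, f (-b) = - f b) (A : Set (α → ℝ))
    (hsub : ∀ b ∈ K, c + T *ᵥ b ∈ K) (hA : ∀ b ∈ K, f b ≤ 0 → c + T *ᵥ b ∈ A) :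
    ENNReal.ofReal (|T.det| / 2) ≤ ProbabilityTheory.cond volume K A := by
  rw [ProbabilityTheory.cond_apply hK]
  set B : Set (α → ℝ) := {b | b ∈ K ∧ f b ≤ 0} with hB
  have hKB : volume K ≤ 2 * volume B := by
    have : K ⊆ B ∪ (-B) := by
      intro x hx
      rcases le_total (f x) 0 with h | h
      · exact Or.inl ⟨hx, h⟩
      · refine Or.inr ?_
        refine ⟨hsym x hx, ?_⟩
        rw [hf]; linarith
    calc volume K ≤ volume (B ∪ (-B)) := measure_mono this
      _ ≤ volume B + volume (-B) := measure_union_le _ _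
      _ = 2 * volume B := by rw [Measure.measure_neg, two_mul]
  have himg : (fun x => c + x) '' ((Matrix.toLin' T) '' B) ⊆ K ∩ A := by
    rintro _ ⟨_, ⟨b, hb, rfl⟩, rfl⟩
    simp only [Matrix.toLin'_apply]
    exact ⟨hsub b hb.1, hA b hb.1 hb.2⟩
  have h1 : ENNReal.ofReal |T.det| * volume B ≤ volume (K ∩ A) := by
    refine le_trans (le_of_eq ?_) (measure_mono himg)
    rw [Set.image_add_left, measure_preimage_add, Measure.addHaar_image_linearMap,
      LinearMap.det_toLin']
  calc ENNReal.ofReal (|T.det| / 2) = (volume K)⁻¹ * (volume K) * ENNReal.ofReal (|T.det| / 2) := by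
        rw [ENNReal.inv_mul_cancel h0 ht, one_mul]
    _ = (volume K)⁻¹ * (ENNReal.ofReal (|T.det| / 2) * volume K) := by ring
    _ ≤ (volume K)⁻¹ * (ENNReal.ofReal (|T.det| / 2) * (2 * volume B)) := by gcongr
    _ = (volume K)⁻¹ * (ENNReal.ofReal |T.det| * volume B) := by
        congr 1
        rw [← mul_assoc]; congr 1
        rw [← ENNReal.ofReal_ofNat 2, ← ENNReal.ofReal_mul (by positivity)]
        congr 1; ring
    _ ≤ _ := by gcongr

lemma fub_mass {α β : Type*} [Fintype α] [DecidableEq α] [Fintype β] [DecidableEq β]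
    (K₁ : Set (α → ℝ)) (hK₁ : MeasurableSet K₁)
    (hsym₁ : ∀ x ∈ K₁, -x ∈ K₁) (h0₁ : volume K₁ ≠ 0) (ht₁ : volume K₁ ≠ ⊤) (c₁ : α → ℝ)
    (T₁ : Matrix α α ℝ) (f₁ : (α → ℝ) → ℝ) (hf₁ : ∀ b, f₁ (-b) = - f₁ b)
    (hsub₁ : ∀ b ∈ K₁, c₁ + T₁ *ᵥ b ∈ K₁)
    (K₂ : Set (β → ℝ)) (hK₂ : MeasurableSet K₂)
    (hsym₂ : ∀ x ∈ K₂, -x ∈ K₂) (h0₂ : volume K₂ ≠ 0) (ht₂ : volume K₂ ≠ ⊤) (c₂ : β → ℝ)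
    (T₂ : Matrix β β ℝ) (f₂ : (α → ℝ) → (β → ℝ) → ℝ) (hf₂ : ∀ z b, f₂ z (-b) = - f₂ z b)
    (hsub₂ : ∀ b ∈ K₂, c₂ + T₂ *ᵥ b ∈ K₂)
    (G : Set ((α → ℝ) × (β → ℝ))) (hG : MeasurableSet G)
    (hgood : ∀ b ∈ K₁, f₁ b ≤ 0 → ∀ b' ∈ K₂, f₂ (c₁ + T₁ *ᵥ b) b' ≤ 0 →
      (c₁ + T₁ *ᵥ b, c₂ + T₂ *ᵥ b') ∈ G) :
    ENNReal.ofReal (|T₁.det| / 2) * ENNReal.ofReal (|T₂.det| / 2) ≤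
      ((ProbabilityTheory.cond volume K₁).prod (ProbabilityTheory.cond volume K₂)) G := by
  rw [Measure.prod_apply hG, mul_comm]
  refine le_trans ?_ (mul_meas_ge_le_lintegral (measurable_measure_prodMk_left hG)
    (ENNReal.ofReal (|T₂.det| / 2)))
  gcongr
  refine half_mass K₁ hK₁ hsym₁ h0₁ ht₁ c₁ T₁ f₁ hf₁ _ hsub₁ ?_
  intro b hb hfb
  rw [Set.mem_setOf_eq]
  refine half_mass K₂ hK₂ hsym₂ h0₂ ht₂ c₂ T₂ (f₂ (c₁ + T₁ *ᵥ b)) (hf₂ _) _ hsub₂ ?_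
  intro b' hb' hfb'
  exact hgood b hb hfb b' hb' hfb'

set_option linter.unusedSectionVars false
section prior
variable {ι : Type} [Fintype ι] [DecidableEq ι]

def KZ (p r : ι → ℕ) (ρ : ℝ) : Set ((Σ l, Fin (p l) × Fin (r l)) → ℝ) :=
  {z | ∑ t, z t ^ 2 ≤ 4 * ρ ^ 2}

def KV (m r : ι → ℕ) : Set ((Σ l, Fin (m l) × Fin (r l)) → ℝ) :=
  {v | ∀ l (x : Fin (r l) → ℝ), ∑ a, (∑ j, v ⟨l, a, j⟩ * x j) ^ 2 ≤ 4 * ∑ j, x j ^ 2}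

lemma KZ_closed (p r : ι → ℕ) (ρ : ℝ) : IsClosed (KZ p r ρ) := by
  unfold KZ
  exact isClosed_le (by fun_prop) (by fun_prop)

lemma KV_closed (m r : ι → ℕ) : IsClosed (KV m r) := by
  unfold KV
  simp only [Set.setOf_forall]
  refine isClosed_iInter fun l => isClosed_iInter fun x => ?_
  exact isClosed_le (by fun_prop) (by fun_prop)

lemma KZ_sym (p r : ι → ℕ) (ρ : ℝ) : ∀ x ∈ KZ p r ρ, -x ∈ KZ p r ρ := by
  intro x hx
  simpa [KZ] using hx

lemma KV_sym (m r : ι → ℕ) : ∀ x ∈ KV m r, -x ∈ KV m r := by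
  intro x hx l y
  have := hx l y
  simpa [Finset.sum_neg_distrib] using this

lemma vol_ne_top {α : Type*} [Fintype α] (K : Set (α → ℝ)) (B : ℝ) (h : ∀ x ∈ K, ∀ t, x t ^ 2 ≤ B) :
    volume K ≠ ⊤ := by
  have : K ⊆ Set.Icc (fun _ => -(Real.sqrt B)) (fun _ => Real.sqrt B) := by
    intro x hx
    exact ⟨fun t => (abs_le.1 (Real.abs_le_sqrt (h x hx t))).1,
      fun t => (abs_le.1 (Real.abs_le_sqrt (h x hx t))).2⟩
  exact ((measure_mono this).trans_lt isCompact_Icc.measure_lt_top).ne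

lemma KZ_top (p r : ι → ℕ) (ρ : ℝ) : volume (KZ p r ρ) ≠ ⊤ := by
  refine vol_ne_top _ (4 * ρ ^ 2) fun x hx t => ?_
  exact le_trans (Finset.single_le_sum (f := fun t => x t ^ 2) (fun i _ => sq_nonneg _)
    (Finset.mem_univ t)) hx

lemma KV_top (m r : ι → ℕ) : volume (KV m r) ≠ ⊤ := by
  refine vol_ne_top _ 4 fun x hx t => ?_
  obtain ⟨l, a, j⟩ := t
  have := hx l (fun i => if i = j then 1 else 0)
  simp at this
  exact le_trans (Finset.single_le_sum (f := fun a => x ⟨l, a, j⟩ ^ 2) (fun i _ => sq_nonneg _)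
    (Finset.mem_univ a)) this

lemma KZ_zero (p r : ι → ℕ) {ρ : ℝ} (hρ : 0 < ρ) : volume (KZ p r ρ) ≠ 0 := by
  refine (MeasureTheory.Measure.measure_pos_of_mem_nhds volume (x := 0) ?_).ne'
  have : {z : (Σ l, Fin (p l) × Fin (r l)) → ℝ | ∑ t, z t ^ 2 < 4 * ρ ^ 2} ∈ nhds 0 := by
    refine (isOpen_lt (by fun_prop) (by fun_prop)).mem_nhds ?_
    simp; positivity
  exact Filter.mem_of_superset this fun z hz => by
    have h : ∑ t, z t ^ 2 < 4 * ρ ^ 2 := hz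
    exact h.le

lemma KV_zero (m r : ι → ℕ) : volume (KV m r) ≠ 0 := by
  refine (MeasureTheory.Measure.measure_pos_of_mem_nhds volume (x := 0) ?_).ne'
  have : {z : (Σ l, Fin (m l) × Fin (r l)) → ℝ | ∑ t, z t ^ 2 < 4} ∈ nhds 0 := by
    refine (isOpen_lt (by fun_prop) (by fun_prop)).mem_nhds ?_
    simp
  refine Filter.mem_of_superset this fun z hz => ?_
  intro l x
  have h1 : ∀ a, (∑ j, z ⟨l, a, j⟩ * x j) ^ 2 ≤ (∑ j, z ⟨l, a, j⟩ ^ 2) * ∑ j, x j ^ 2 :=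
    fun a => Finset.sum_mul_sq_le_sq_mul_sq _ _ _
  refine (Finset.sum_le_sum fun a _ => h1 a).trans ?_
  rw [← Finset.sum_mul]
  refine mul_le_mul_of_nonneg_right ?_ (Finset.sum_nonneg fun i _ => sq_nonneg _)
  refine le_trans ?_ (le_of_lt hz)
  rw [Fintype.sum_sigma]
  rw [← Fintype.sum_prod_type' (f := fun a j => z ⟨l, a, j⟩ ^ 2)]
  exact Finset.single_le_sum (f := fun l => ∑ t : Fin (m l) × Fin (r l), z ⟨l, t⟩ ^ 2)
    (fun i _ => Finset.sum_nonneg fun i _ => sq_nonneg _) (Finset.mem_univ l)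

/-- orthogonal times diagonal, blockwise -/
def TV (m r : ι → ℕ) (U : ∀ l, Matrix (Fin (m l)) (Fin (m l)) ℝ) (τ : ∀ l, Fin (m l) → ℝ) :
    Matrix (Σ l, Fin (m l) × Fin (r l)) (Σ l, Fin (m l) × Fin (r l)) ℝ :=
  Matrix.blockDiagonal' (fun l => Matrix.kronecker (U l) (1 : Matrix (Fin (r l)) (Fin (r l)) ℝ)) *
    Matrix.diagonal (fun t => τ t.1 t.2.1)

lemma TV_det (m r : ι → ℕ) (U : ∀ l, Matrix (Fin (m l)) (Fin (m l)) ℝ) (τ : ∀ l, Fin (m l) → ℝ)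
    (hU : ∀ l, U l * (U l)ᵀ = 1) (hτ : ∀ l k, 0 < τ l k) :
    |(TV m r U τ).det| = ∏ l, ∏ k, τ l k ^ (r l) := by
  unfold TV
  rw [Matrix.det_mul, Matrix.det_diagonal, abs_mul]
  have h1 : |(Matrix.blockDiagonal' (fun l => Matrix.kronecker (U l)
      (1 : Matrix (Fin (r l)) (Fin (r l)) ℝ))).det| = 1 := by
    set O := Matrix.blockDiagonal' (fun l => Matrix.kronecker (U l)
      (1 : Matrix (Fin (r l)) (Fin (r l)) ℝ)) with hO
    have : O * Oᵀ = 1 := by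
      rw [hO, Matrix.blockDiagonal'_transpose, ← Matrix.blockDiagonal'_mul,
        ← Matrix.blockDiagonal'_one]
      congr 1
      funext l
      show _ * (Matrix.kronecker (U l) (1 : Matrix (Fin (r l)) (Fin (r l)) ℝ))ᵀ = 1
      unfold Matrix.kronecker
      rw [← Matrix.kroneckerMap_transpose, ← Matrix.mul_kronecker_mul, hU]
      simp
    have h2 := congrArg Matrix.det this
    rw [Matrix.det_mul, Matrix.det_transpose, Matrix.det_one] at h2
    have : |O.det| * |O.det| = 1 := by rw [abs_mul_abs_self, h2]
    nlinarith [abs_nonneg O.det]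
  rw [h1, one_mul, abs_of_pos (Finset.prod_pos fun i _ => hτ _ _), Fintype.prod_sigma]
  refine Finset.prod_congr rfl fun l _ => ?_
  rw [Fintype.prod_prod_type]
  refine Finset.prod_congr rfl fun k _ => ?_
  simp

lemma TV_mulVec (m r : ι → ℕ) (U : ∀ l, Matrix (Fin (m l)) (Fin (m l)) ℝ) (τ : ∀ l, Fin (m l) → ℝ)
    (b : (Σ l, Fin (m l) × Fin (r l)) → ℝ) (l a j) :
    (TV m r U τ *ᵥ b) ⟨l, a, j⟩ = ∑ k, U l a k * (τ l k * b ⟨l, k, j⟩) := by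
  unfold TV
  rw [← Matrix.mulVec_mulVec, Matrix.mulVec, dotProduct, Fintype.sum_sigma]
  rw [Finset.sum_eq_single l]
  · rw [Fintype.sum_prod_type]
    refine Finset.sum_congr rfl fun k _ => ?_
    rw [Finset.sum_eq_single j]
    · simp [Matrix.blockDiagonal'_apply, Matrix.mulVec_diagonal]
    · intro j' _ hj
      simp [Matrix.blockDiagonal'_apply, Matrix.one_apply, hj.symm]
    · simp
  · intro l' _ hl
    refine Finset.sum_eq_zero fun t _ => ?_
    rw [Matrix.blockDiagonal'_apply_ne _ _ _ hl.symm, zero_mul]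
  · simp

def Psi {p m r : ι → ℕ} (z : (Σ l, Fin (p l) × Fin (r l)) → ℝ)
    (v : (Σ l, Fin (m l) × Fin (r l)) → ℝ) (l : ι) : Matrix (Fin (p l)) (Fin (m l)) ℝ :=
  Matrix.of fun i a => ∑ j, z ⟨l, i, j⟩ * v ⟨l, a, j⟩

end prior

lemma flat_s_exists {P : Type*} [Fintype P] (Y ν : P → ℝ) (hν : ∀ t, 0 ≤ ν t) (ρ : ℝ) (hρ : 0 < ρ)
    (hY : ∑ t, Y t ^ 2 ≤ ρ ^ 2) (hS : 1 / 64 < ∑ t, ν t * Y t ^ 2) :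
    ∃ s : ℝ, 0 < s ∧ 1 / 16 ≤ s * ρ ^ 2 ∧
      ∑ t, ν t * Y t ^ 2 * (s ^ 2 / (ν t + s) ^ 2) = 1 / 64 := by
  set S := ∑ t, ν t * Y t ^ 2 with hSd
  set B := ∑ t, ν t with hB
  have hB0 : 0 ≤ B := Finset.sum_nonneg fun i _ => hν i
  have hBt : ∀ t, ν t ≤ B := fun t => Finset.single_le_sum (fun i _ => hν i) (Finset.mem_univ t)
  set φ : ℝ → ℝ := fun s => ∑ t, ν t * Y t ^ 2 * (s ^ 2 / (ν t + s) ^ 2) with hφ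
  set s0 : ℝ := 1 / (16 * ρ ^ 2) with hs0
  have hs0p : 0 < s0 := by positivity
  have hup : ∀ s, 0 < s → φ s ≤ s * ρ ^ 2 / 4 := by
    intro s hs
    calc φ s ≤ ∑ t, s / 4 * Y t ^ 2 := by
          refine Finset.sum_le_sum fun t _ => ?_
          have h1 : 0 < ν t + s := by linarith [hν t]
          have : ν t * (s ^ 2 / (ν t + s) ^ 2) ≤ s / 4 := by
            rw [← mul_div_assoc, div_le_iff₀ (by positivity)]
            nlinarith [mul_nonneg hs.le (sq_nonneg (ν t - s))]
          calc _ = ν t * (s ^ 2 / (ν t + s) ^ 2) * Y t ^ 2 := by ring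
            _ ≤ _ := mul_le_mul_of_nonneg_right this (sq_nonneg _)
      _ = s / 4 * ∑ t, Y t ^ 2 := by rw [Finset.mul_sum]
      _ ≤ s / 4 * ρ ^ 2 := mul_le_mul_of_nonneg_left hY (by positivity)
      _ = _ := by ring
  have hSpos : 0 < S - 1 / 64 := by linarith
  set s1 : ℝ := max s0 (2 * B * S / (S - 1 / 64)) with hs1
  have hs1p : 0 < s1 := lt_of_lt_of_le hs0p (le_max_left _ _)
  have h1 : 1 / 64 ≤ φ s1 := by
    have hle : 2 * B * S / (S - 1 / 64) ≤ s1 := le_max_right _ _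
    rw [div_le_iff₀ hSpos] at hle
    have : (1 - 2 * B / s1) * S ≤ φ s1 := by
      rw [hSd, Finset.mul_sum]
      refine Finset.sum_le_sum fun t _ => ?_
      have h1 : 0 < ν t + s1 := by linarith [hν t]
      have : 1 - 2 * B / s1 ≤ s1 ^ 2 / (ν t + s1) ^ 2 := by
        have e : 1 - 2 * ν t / s1 ≤ s1 ^ 2 / (ν t + s1) ^ 2 := by
          rw [le_div_iff₀ (by positivity), one_sub_div hs1p.ne', div_mul_eq_mul_div, div_le_iff₀ hs1p]
          nlinarith [mul_nonneg (hν t) (hν t), mul_nonneg (mul_nonneg (hν t) (hν t)) (hν t),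
            mul_nonneg (mul_nonneg (hν t) (hν t)) hs1p.le]
        have : 2 * ν t / s1 ≤ 2 * B / s1 := by gcongr; exact hBt t
        linarith
      rw [mul_comm]
      exact mul_le_mul_of_nonneg_left this (mul_nonneg (hν t) (sq_nonneg _))
    refine le_trans ?_ this
    have : (1 - 2 * B / s1) * S = S - 2 * B * S / s1 := by ring
    rw [this]
    have : 2 * B * S / s1 ≤ S - 1 / 64 := by
      rw [div_le_iff₀ hs1p]; linarith
    linarith
  have h0 : φ s0 ≤ 1 / 64 := by
    refine (hup s0 hs0p).trans (le_of_eq ?_)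
    rw [hs0]; field_simp; norm_num
  have hc : ContinuousOn φ (Set.Icc s0 s1) := by
    refine continuousOn_finset_sum _ fun t _ => ?_
    refine ContinuousOn.mul continuousOn_const (ContinuousOn.div (by fun_prop) (by fun_prop) ?_)
    intro x hx
    have : 0 < ν t + x := by linarith [hν t, hx.1]
    positivity
  obtain ⟨s, hs, hs'⟩ := intermediate_value_Icc (le_max_left s0 _) hc ⟨h0, h1⟩
  have hsp : 0 < s := lt_of_lt_of_le hs0p hs.1
  refine ⟨s, hsp, ?_, hs'⟩
  have := hup s hsp
  rw [hs'] at this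
  linarith

lemma flat_bounds {P : Type*} [Fintype P] (Y ν g E Q : P → ℝ) (hν : ∀ t, 0 ≤ ν t) (s : ℝ) (hs : 0 < s)
    (hφ : ∑ t, ν t * Y t ^ 2 * (s ^ 2 / (ν t + s) ^ 2) = 1 / 64)
    (hg1 : ∀ t, s ≤ ν t → g t = ν t / (ν t + s)) (hg2 : ∀ t, ν t < s → g t = 0)
    (hE : ∑ t, max (ν t) s * E t ^ 2 ≤ 4 / 4096) (hQ : ∑ t, max (ν t) s * Q t ^ 2 ≤ 16 / 4096)
    (hgE : ∑ t, g t * Y t * E t ≤ 0) (hgQ : ∑ t, g t * Y t * Q t ≤ 0) :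
    ∑ t, ν t * (g t * Y t + E t + Q t - Y t) ^ 2 ≤ 1 / 4 ∧
    ∑ t, (g t * Y t + E t + Q t) ^ 2 ≤ ∑ t, Y t ^ 2 := by
  constructor
  · have h1 : ∀ t, ν t * (g t * Y t + E t + Q t - Y t) ^ 2 ≤
        8 * (ν t * Y t ^ 2 * (s ^ 2 / (ν t + s) ^ 2)) + 4 * (max (ν t) s * E t ^ 2) +
          4 * (max (ν t) s * Q t ^ 2) := by
      intro t
      have hp : 0 < ν t + s := by linarith [hν t]
      have ha : (g t - 1) ^ 2 ≤ 4 * (s ^ 2 / (ν t + s) ^ 2) := by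
        rcases le_or_gt s (ν t) with h | h
        · rw [hg1 t h]
          have : ν t / (ν t + s) - 1 = - (s / (ν t + s)) := by field_simp; ring
          rw [this, neg_sq, div_pow]
          have : 0 ≤ s ^ 2 / (ν t + s) ^ 2 := by positivity
          linarith
        · rw [hg2 t h, ← mul_div_assoc, le_div_iff₀ (by positivity)]
          nlinarith [hν t]
      have hsq : (g t * Y t + E t + Q t - Y t) ^ 2 ≤
          2 * ((g t - 1) ^ 2 * Y t ^ 2) + 4 * E t ^ 2 + 4 * Q t ^ 2 := by
        nlinarith [sq_nonneg ((g t - 1) * Y t - E t - Q t), sq_nonneg (E t - Q t)]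
      have h2 : (g t - 1) ^ 2 * Y t ^ 2 ≤ 4 * (s ^ 2 / (ν t + s) ^ 2) * Y t ^ 2 :=
        mul_le_mul_of_nonneg_right ha (sq_nonneg _)
      have h3 : ν t * E t ^ 2 ≤ max (ν t) s * E t ^ 2 :=
        mul_le_mul_of_nonneg_right (le_max_left _ _) (sq_nonneg _)
      have h4 : ν t * Q t ^ 2 ≤ max (ν t) s * Q t ^ 2 :=
        mul_le_mul_of_nonneg_right (le_max_left _ _) (sq_nonneg _)
      calc _ ≤ ν t * (2 * (4 * (s ^ 2 / (ν t + s) ^ 2) * Y t ^ 2) + 4 * E t ^ 2 + 4 * Q t ^ 2) :=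
            mul_le_mul_of_nonneg_left (by linarith) (hν t)
        _ = 8 * (ν t * Y t ^ 2 * (s ^ 2 / (ν t + s) ^ 2)) + 4 * (ν t * E t ^ 2) +
          4 * (ν t * Q t ^ 2) := by ring
        _ ≤ _ := by linarith
    refine (Finset.sum_le_sum fun t _ => h1 t).trans ?_
    rw [Finset.sum_add_distrib, Finset.sum_add_distrib, ← Finset.mul_sum, ← Finset.mul_sum,
      ← Finset.mul_sum, hφ]
    linarith
  · have h1 : ∀ t, s * (g t * Y t + E t + Q t) ^ 2 ≤
        s * Y t ^ 2 - ν t * Y t ^ 2 * (s ^ 2 / (ν t + s) ^ 2) + 2 * s * (g t * Y t * E t) +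
          2 * s * (g t * Y t * Q t) + 2 * (max (ν t) s * E t ^ 2) + 2 * (max (ν t) s * Q t ^ 2) := by
      intro t
      have hp : 0 < ν t + s := by linarith [hν t]
      have ha : s * g t ^ 2 ≤ s - ν t * (s ^ 2 / (ν t + s) ^ 2) := by
        have e : s - ν t * (s ^ 2 / (ν t + s) ^ 2) = (s * (ν t + s) ^ 2 - ν t * s ^ 2) / (ν t + s) ^ 2 := by
          field_simp
        rcases le_or_gt s (ν t) with h | h
        · rw [hg1 t h, e, div_pow, ← mul_div_assoc]
          gcongr
          nlinarith [mul_pos hs hs, mul_pos (mul_pos hs hs) hs, mul_nonneg (mul_pos hs hs).le (hν t)]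
        · rw [hg2 t h, e]
          have : 0 ≤ s * (ν t + s) ^ 2 - ν t * s ^ 2 := by
            nlinarith [mul_pos hs hs, mul_pos (mul_pos hs hs) hs, mul_nonneg (mul_pos hs hs).le (hν t),
              mul_nonneg hs.le (sq_nonneg (ν t))]
          have : 0 ≤ (s * (ν t + s) ^ 2 - ν t * s ^ 2) / (ν t + s) ^ 2 := by positivity
          simpa using this
      have h2 : s * g t ^ 2 * Y t ^ 2 ≤ (s - ν t * (s ^ 2 / (ν t + s) ^ 2)) * Y t ^ 2 :=
        mul_le_mul_of_nonneg_right ha (sq_nonneg _)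
      have h3 : s * E t ^ 2 ≤ max (ν t) s * E t ^ 2 :=
        mul_le_mul_of_nonneg_right (le_max_right _ _) (sq_nonneg _)
      have h4 : s * Q t ^ 2 ≤ max (ν t) s * Q t ^ 2 :=
        mul_le_mul_of_nonneg_right (le_max_right _ _) (sq_nonneg _)
      have h5 : 0 ≤ s * (E t - Q t) ^ 2 := by positivity
      nlinarith
    have h2 := Finset.sum_le_sum fun t (_ : t ∈ Finset.univ) => h1 t
    simp only [Finset.sum_add_distrib, Finset.sum_sub_distrib, ← Finset.mul_sum] at h2
    rw [hφ] at h2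
    have h3 : 2 * s * ∑ t, g t * Y t * E t ≤ 0 := mul_nonpos_of_nonneg_of_nonpos (by positivity) hgE
    have h4 : 2 * s * ∑ t, g t * Y t * Q t ≤ 0 := mul_nonpos_of_nonneg_of_nonpos (by positivity) hgQ
    have : s * ∑ t, (g t * Y t + E t + Q t) ^ 2 ≤ s * ∑ t, Y t ^ 2 := by linarith
    exact le_of_mul_le_mul_left this hs

lemma frobSq_mul_orth {a b : ℕ} (A : Matrix (Fin a) (Fin b) ℝ) (U : Matrix (Fin b) (Fin b) ℝ)
    (hU : U * Uᵀ = 1) : frobSq (A * U) = frobSq A := by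
  have key : ∀ B : Matrix (Fin a) (Fin b) ℝ, frobSq B = (B * Bᵀ).trace := by
    intro B
    simp [frobSq, Matrix.trace, Matrix.mul_apply, sq]
  rw [key, key, Matrix.transpose_mul, Matrix.mul_assoc, ← Matrix.mul_assoc U, hU, Matrix.one_mul]

def hat {a b : ℕ} (e : Fin a → Fin b) (f : Fin a → ℝ) (k : Fin b) : ℝ :=
  ∑ j, if e j = k then f j else 0

lemma hat_apply {a b : ℕ} (e : Fin a → Fin b) (he : Function.Injective e) (f : Fin a → ℝ) (j : Fin a) :
    hat e f (e j) = f j := by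
  unfold hat
  rw [Finset.sum_eq_single j]
  · simp
  · intro i _ hi
    rw [if_neg fun h => hi (he h)]
  · simp

lemma hat_off {a b : ℕ} (e : Fin a → Fin b) (f : Fin a → ℝ) (k : Fin b) (hk : k ∉ Set.range e) :
    hat e f k = 0 := by
  unfold hat
  refine Finset.sum_eq_zero fun j _ => ?_
  rw [if_neg fun h => hk ⟨j, h⟩]

lemma hat_sum {a b : ℕ} (e : Fin a → Fin b) (he : Function.Injective e) (f : Fin a → ℝ) (w : Fin b → ℝ) :
    ∑ k, w k * hat e f k ^ 2 = ∑ j, w (e j) * f j ^ 2 := by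
  symm
  refine Fintype.sum_of_injective e he _ _ ?_ ?_
  · intro k hk; rw [hat_off e f k hk]; ring
  · intro j; rw [hat_apply e he]

set_option linter.unusedSectionVars false
section prior
variable {ι : Type} [Fintype ι] [DecidableEq ι]

lemma psi_mul {p m r : ι → ℕ} (U : ∀ l, Matrix (Fin (m l)) (Fin (m l)) ℝ)
    (hU' : ∀ l, (U l)ᵀ * U l = 1) (τ : ∀ l, Fin (m l) → ℝ) (e : ∀ l, Fin (r l) → Fin (m l))
    (z : (Σ l, Fin (p l) × Fin (r l)) → ℝ) (b : (Σ l, Fin (m l) × Fin (r l)) → ℝ) (l : ι) (i k) :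
    (Psi z ((fun t : (Σ l, Fin (m l) × Fin (r l)) => U t.1 t.2.1 (e t.1 t.2.2)) + TV m r U τ *ᵥ b) l * U l) i k =
      hat (e l) (fun j => z ⟨l, i, j⟩) k + τ l k * ∑ j, z ⟨l, i, j⟩ * b ⟨l, k, j⟩ := by
  have hUU : ∀ k', ∑ a, U l a k' * U l a k = if k' = k then 1 else 0 := by
    intro k'
    have := congrFun (congrFun (hU' l) k') k
    rw [Matrix.mul_apply, Matrix.one_apply] at this
    simpa using this
  have h1 : ∀ j, ∑ a, (U l a (e l j) + ∑ k', U l a k' * (τ l k' * b ⟨l, k', j⟩)) * U l a k =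
      (if e l j = k then 1 else 0) + τ l k * b ⟨l, k, j⟩ := by
    intro j
    simp only [add_mul, Finset.sum_add_distrib, hUU]
    congr 1
    simp only [Finset.sum_mul]
    rw [Finset.sum_comm]
    calc _ = ∑ k', (τ l k' * b ⟨l, k', j⟩) * ∑ a, U l a k' * U l a k := by
          refine Finset.sum_congr rfl fun k' _ => ?_
          rw [Finset.mul_sum]
          refine Finset.sum_congr rfl fun a _ => ?_
          ring
      _ = _ := by simp [hUU]
  rw [Matrix.mul_apply]
  simp only [Psi, Matrix.of_apply, Pi.add_apply, TV_mulVec, Finset.sum_mul]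
  rw [Finset.sum_comm]
  unfold hat
  rw [Finset.mul_sum, ← Finset.sum_add_distrib]
  refine Finset.sum_congr rfl fun j _ => ?_
  calc _ = z ⟨l, i, j⟩ * ∑ a, (U l a (e l j) + ∑ k', U l a k' * (τ l k' * b ⟨l, k', j⟩)) * U l a k := by
        rw [Finset.mul_sum]
        refine Finset.sum_congr rfl fun a _ => ?_
        ring
    _ = _ := by
        rw [h1]
        split_ifs <;> ring

lemma psi_cont {p m r : ι → ℕ} (l : ι) (i k) : Continuous (fun zv :
    ((Σ l, Fin (p l) × Fin (r l)) → ℝ) × ((Σ l, Fin (m l) × Fin (r l)) → ℝ) => Psi zv.1 zv.2 l i k) := by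
  unfold Psi
  simp only [Matrix.of_apply]
  fun_prop

lemma core_mass (p m : ι → ℕ) (U : ∀ l, Matrix (Fin (m l)) (Fin (m l)) ℝ)
    (hU : ∀ l, U l * (U l)ᵀ = 1) (hU' : ∀ l, (U l)ᵀ * U l = 1)
    (y : ∀ l, Matrix (Fin (p l)) (Fin (m l)) ℝ) (ν : ∀ l, Fin (m l) → ℝ) (hν : ∀ l k, 0 ≤ ν l k)
    (ρ : ℝ) (hρ : 0 < ρ) (hY : ∑ l, frobSq (y l) ≤ ρ ^ 2)
    (hS : 1 / 64 < ∑ l, ∑ i, ∑ k, ν l k * y l i k ^ 2) :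
    ∃ Hi : ∀ l, Finset (Fin (m l)), (∀ l, ∀ k ∈ Hi l, 1 / 16 ≤ ν l k * ρ ^ 2) ∧
      ENNReal.ofReal (1 / 4 * ∏ l, ∏ k ∈ Hi l, (1 / (64 * ρ * Real.sqrt (ν l k))) ^ (p l + m l)) ≤
      ((ProbabilityTheory.cond volume (KZ p (fun l => (Hi l).card) ρ)).prod
        (ProbabilityTheory.cond volume (KV m (fun l => (Hi l).card))))
        {zv | ∑ l, frobSq (Psi zv.1 zv.2 l : Matrix (Fin (p l)) (Fin (m l)) ℝ) ≤ ρ ^ 2 ∧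
          ∑ l, ∑ i, ∑ k, ν l k * (((Psi zv.1 zv.2 l : Matrix (Fin (p l)) (Fin (m l)) ℝ) * U l) i k
            - y l i k) ^ 2 ≤ 1 / 4} := by
  have flat : ∀ F : ∀ l, Fin (p l) → Fin (m l) → ℝ,
      ∑ t : (Σ l, Fin (p l) × Fin (m l)), F t.1 t.2.1 t.2.2 = ∑ l, ∑ i, ∑ k, F l i k := by
    intro F
    rw [Fintype.sum_sigma]
    refine Finset.sum_congr rfl fun l _ => ?_
    rw [Fintype.sum_prod_type]
  set Y : (Σ l, Fin (p l) × Fin (m l)) → ℝ := fun t => y t.1 t.2.1 t.2.2 with hYd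
  set N : (Σ l, Fin (p l) × Fin (m l)) → ℝ := fun t => ν t.1 t.2.2 with hNd
  have hY2 : ∑ t, Y t ^ 2 ≤ ρ ^ 2 := by
    rw [hYd, flat (fun l i k => y l i k ^ 2)]; exact hY
  obtain ⟨s, hs, hsρ, hφ⟩ := flat_s_exists Y N (fun t => hν _ _) ρ hρ hY2 (by
    rw [hYd, hNd, flat (fun l i k => ν l k * y l i k ^ 2)]; exact hS)
  set Hi : ∀ l, Finset (Fin (m l)) := fun l => Finset.univ.filter (fun k => s ≤ ν l k) with hHi
  set r : ι → ℕ := fun l => (Hi l).card with hr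
  set e : ∀ l, Fin (r l) → Fin (m l) := fun l => (Hi l).orderEmbOfFin rfl with he
  have hinj : ∀ l, Function.Injective (e l) := fun l => ((Hi l).orderEmbOfFin rfl).injective
  have hrange : ∀ l k, k ∈ Set.range (e l) ↔ s ≤ ν l k := by
    intro l k
    rw [he]; simp only [Finset.range_orderEmbOfFin]
    simp [hHi]
  refine ⟨Hi, ?_, ?_⟩
  · intro l k hk
    have : s ≤ ν l k := by simpa [hHi] using hk
    nlinarith [sq_nonneg ρ]
  have hmx : ∀ l k, 0 < max (ν l k) s := fun l k => lt_of_lt_of_le hs (le_max_right _ _)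
  set τ : ∀ l, Fin (m l) → ℝ := fun l k => 1 / (64 * ρ * Real.sqrt (max (ν l k) s)) with hτd
  have hτ : ∀ l k, 0 < τ l k := by
    intro l k
    have := Real.sqrt_pos.2 (hmx l k)
    simp only [hτd]; positivity
  have hτm : ∀ l k, max (ν l k) s * τ l k ^ 2 = 1 / (4096 * ρ ^ 2) := by
    intro l k
    have h1 := hmx l k
    simp only [hτd]
    rw [div_pow, mul_pow, Real.sq_sqrt h1.le]
    field_simp; norm_num
  have hτ2 : ∀ l k, τ l k ^ 2 ≤ 1 / 256 := by
    intro l k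
    have h1 : s * τ l k ^ 2 ≤ 1 / (4096 * ρ ^ 2) := by
      rw [← hτm l k]
      exact mul_le_mul_of_nonneg_right (le_max_right _ _) (sq_nonneg _)
    rw [le_div_iff₀ (by positivity)] at h1
    nlinarith [sq_nonneg (τ l k)]
  set g : ∀ l, Fin (m l) → ℝ := fun l k => if s ≤ ν l k then ν l k / (ν l k + s) else 0 with hg
  have hg0 : ∀ l k, 0 ≤ g l k := by
    intro l k; simp only [hg]; split_ifs
    · have := hν l k; positivity
    · exact le_rfl
  have hg1 : ∀ l k, g l k ≤ 1 := by
    intro l k; simp only [hg]; split_ifs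
    · have := hν l k
      rw [div_le_one (by linarith)]; linarith
    · norm_num
  set c₁ : (Σ l, Fin (p l) × Fin (r l)) → ℝ :=
    fun t => g t.1 (e t.1 t.2.2) * y t.1 t.2.1 (e t.1 t.2.2) with hc₁
  set T₁ : Matrix (Σ l, Fin (p l) × Fin (r l)) (Σ l, Fin (p l) × Fin (r l)) ℝ :=
    Matrix.diagonal (fun t => τ t.1 (e t.1 t.2.2)) with hT₁
  set E : ((Σ l, Fin (p l) × Fin (r l)) → ℝ) → (Σ l, Fin (p l) × Fin (m l)) → ℝ :=
    fun b t => hat (e t.1) (fun j => τ t.1 (e t.1 j) * b ⟨t.1, t.2.1, j⟩) t.2.2 with hE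
  set g' : (Σ l, Fin (p l) × Fin (m l)) → ℝ := fun t => g t.1 t.2.2 with hg'
  set Q : ((Σ l, Fin (p l) × Fin (r l)) → ℝ) → ((Σ l, Fin (m l) × Fin (r l)) → ℝ) →
      (Σ l, Fin (p l) × Fin (m l)) → ℝ :=
    fun z b t => τ t.1 t.2.2 * ∑ j, z ⟨t.1, t.2.1, j⟩ * b ⟨t.1, t.2.2, j⟩ with hQ
  have hz : ∀ b, ∀ l i j, (c₁ + T₁ *ᵥ b) ⟨l, i, j⟩ =
      g l (e l j) * y l i (e l j) + τ l (e l j) * b ⟨l, i, j⟩ := by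
    intro b l i j
    simp [hc₁, hT₁, Matrix.mulVec_diagonal]
  have flat' : ∀ F : ∀ l, Fin (p l) → Fin (r l) → ℝ,
      ∑ t : (Σ l, Fin (p l) × Fin (r l)), F t.1 t.2.1 t.2.2 = ∑ l, ∑ i, ∑ j, F l i j := by
    intro F
    rw [Fintype.sum_sigma]
    refine Finset.sum_congr rfl fun l _ => ?_
    rw [Fintype.sum_prod_type]
  have hsub1 : ∀ b ∈ KZ p r ρ, c₁ + T₁ *ᵥ b ∈ KZ p r ρ := by
    intro b hb
    have hb' : ∑ t, b t ^ 2 ≤ 4 * ρ ^ 2 := hb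
    show ∑ t, (c₁ + T₁ *ᵥ b) t ^ 2 ≤ 4 * ρ ^ 2
    have h1 : ∀ t, (c₁ + T₁ *ᵥ b) t ^ 2 ≤ 2 * y t.1 t.2.1 (e t.1 t.2.2) ^ 2 + 2 / 256 * b t ^ 2 := by
      rintro ⟨l, i, j⟩
      rw [hz]
      simp only
      have h2 : (g l (e l j) * y l i (e l j)) ^ 2 ≤ y l i (e l j) ^ 2 := by
        rw [mul_pow]
        have : g l (e l j) ^ 2 ≤ 1 := by nlinarith [hg0 l (e l j), hg1 l (e l j)]
        nlinarith [sq_nonneg (y l i (e l j))]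
      have h3 : (τ l (e l j) * b ⟨l, i, j⟩) ^ 2 ≤ 1 / 256 * b ⟨l, i, j⟩ ^ 2 := by
        rw [mul_pow]
        exact mul_le_mul_of_nonneg_right (hτ2 _ _) (sq_nonneg _)
      nlinarith [sq_nonneg (g l (e l j) * y l i (e l j) - τ l (e l j) * b ⟨l, i, j⟩)]
    have h2 : ∑ t : (Σ l, Fin (p l) × Fin (r l)), y t.1 t.2.1 (e t.1 t.2.2) ^ 2 ≤ ρ ^ 2 := by
      rw [flat' (fun l i j => y l i (e l j) ^ 2)]
      refine le_trans ?_ hY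
      refine Finset.sum_le_sum fun l _ => Finset.sum_le_sum fun i _ => ?_
      calc ∑ j, y l i (e l j) ^ 2 = ∑ k ∈ Finset.univ.map ⟨e l, hinj l⟩, y l i k ^ 2 := by
            rw [Finset.sum_map]; rfl
        _ ≤ _ := Finset.sum_le_sum_of_subset_of_nonneg (Finset.subset_univ _)
            (fun _ _ _ => sq_nonneg _)
    refine (Finset.sum_le_sum fun t _ => h1 t).trans ?_
    rw [Finset.sum_add_distrib, ← Finset.mul_sum, ← Finset.mul_sum]
    nlinarith [sq_nonneg ρ]
  set c₂ : (Σ l, Fin (m l) × Fin (r l)) → ℝ := fun t => U t.1 t.2.1 (e t.1 t.2.2) with hc₂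
  have hsub2 : ∀ b ∈ KV m r, c₂ + TV m r U τ *ᵥ b ∈ KV m r := by
    intro b hb l x
    have hv : ∀ a, ∑ j, (c₂ + TV m r U τ *ᵥ b) ⟨l, a, j⟩ * x j =
        (U l *ᵥ fun k => hat (e l) x k + τ l k * ∑ j, b ⟨l, k, j⟩ * x j) a := by
      intro a
      simp only [Pi.add_apply, TV_mulVec, hc₂]
      simp only [Matrix.mulVec, dotProduct, mul_add,
        Finset.sum_add_distrib, add_mul]
      congr 1
      · unfold hat
        simp only [Finset.mul_sum]
        rw [Finset.sum_comm]
        refine Finset.sum_congr rfl fun j _ => ?_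
        simp
      · simp only [Finset.mul_sum, Finset.sum_mul]
        rw [Finset.sum_comm]
        refine Finset.sum_congr rfl fun k _ => Finset.sum_congr rfl fun j _ => ?_
        ring
    have horth : ∀ w : Fin (m l) → ℝ, ∑ a, (U l *ᵥ w) a ^ 2 = ∑ k, w k ^ 2 := by
      intro w
      have : (U l *ᵥ w) ⬝ᵥ (U l *ᵥ w) = w ⬝ᵥ w := by
        rw [Matrix.dotProduct_mulVec, Matrix.vecMul_mulVec, ← Matrix.dotProduct_mulVec, hU' l, Matrix.one_mulVec]
      simpa [dotProduct, sq] using this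
    simp only [hv]
    rw [horth]
    have h1 : ∀ k, (hat (e l) x k + τ l k * ∑ j, b ⟨l, k, j⟩ * x j) ^ 2 ≤
        2 * hat (e l) x k ^ 2 + 2 / 256 * (∑ j, b ⟨l, k, j⟩ * x j) ^ 2 := by
      intro k
      set B := ∑ j, b ⟨l, k, j⟩ * x j
      have h3 : (τ l k * B) ^ 2 ≤ 1 / 256 * B ^ 2 := by
        rw [mul_pow]
        exact mul_le_mul_of_nonneg_right (hτ2 _ _) (sq_nonneg _)
      nlinarith [sq_nonneg (hat (e l) x k - τ l k * B)]
    refine (Finset.sum_le_sum fun k _ => h1 k).trans ?_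
    have hh := hat_sum (e l) (hinj l) x (fun _ => 1)
    simp only [one_mul] at hh
    rw [Finset.sum_add_distrib, ← Finset.mul_sum, ← Finset.mul_sum, hh]
    have h2 := hb l x
    have h3 : 0 ≤ ∑ j, x j ^ 2 := Finset.sum_nonneg fun _ _ => sq_nonneg _
    linarith
  have hgood := fub_mass (KZ p r ρ) (KZ_closed p r ρ).measurableSet (KZ_sym p r ρ) (KZ_zero p r hρ)
    (KZ_top p r ρ) c₁ T₁ (fun b => ∑ t, g' t * Y t * E b t) (by
      intro b
      rw [← Finset.sum_neg_distrib]
      refine Finset.sum_congr rfl fun t _ => ?_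
      have : E (-b) t = - E b t := by
        simp only [hE, hat]
        rw [← Finset.sum_neg_distrib]
        refine Finset.sum_congr rfl fun j _ => ?_
        split_ifs <;> simp
      rw [this]; ring) hsub1
    (KV m r) (KV_closed m r).measurableSet (KV_sym m r) (KV_zero m r) (KV_top m r) c₂
    (TV m r U τ) (fun z b => ∑ t, g' t * Y t * Q z b t) (by
      intro z b
      rw [← Finset.sum_neg_distrib]
      refine Finset.sum_congr rfl fun t _ => ?_
      have : Q z (-b) t = - Q z b t := by
        simp only [hQ]
        simp [Finset.sum_neg_distrib]
      rw [this]; ring) hsub2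
    {zv | ∑ l, frobSq (Psi zv.1 zv.2 l : Matrix (Fin (p l)) (Fin (m l)) ℝ) ≤ ρ ^ 2 ∧
          ∑ l, ∑ i, ∑ k, ν l k * (((Psi zv.1 zv.2 l : Matrix (Fin (p l)) (Fin (m l)) ℝ) * U l) i k
            - y l i k) ^ 2 ≤ 1 / 4} (by
      have hp := @psi_cont ι _ _ p m r
      rw [Set.ofPred_and]
      refine (IsClosed.inter (isClosed_le ?_ continuous_const) (isClosed_le ?_ continuous_const)).measurableSet
      · unfold frobSq
        exact continuous_finsetSum _ fun l _ => continuous_finsetSum _ fun i _ =>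
          continuous_finsetSum _ fun k _ => (hp l i k).pow 2
      · simp only [Matrix.mul_apply]
        refine continuous_finsetSum _ fun l _ => continuous_finsetSum _ fun i _ =>
          continuous_finsetSum _ fun k _ => continuous_const.mul (Continuous.pow (Continuous.sub
            (continuous_finsetSum _ fun a _ => (hp l i a).mul continuous_const) continuous_const) 2))
    (by
      intro b hb hfb b' hb' hfb'
      have hbs : ∑ t, b t ^ 2 ≤ 4 * ρ ^ 2 := hb
      have hzs : ∑ t, (c₁ + T₁ *ᵥ b) t ^ 2 ≤ 4 * ρ ^ 2 := hsub1 b hb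
      set z := c₁ + T₁ *ᵥ b with hzd
      have hform : ∀ l i k, (Psi z (c₂ + TV m r U τ *ᵥ b') l * U l) i k =
          g' ⟨l, i, k⟩ * Y ⟨l, i, k⟩ + E b ⟨l, i, k⟩ + Q z b' ⟨l, i, k⟩ := by
        intro l i k
        rw [hc₂, psi_mul U hU' τ e z b' l i k]
        have : hat (e l) (fun j => z ⟨l, i, j⟩) k = g' ⟨l, i, k⟩ * Y ⟨l, i, k⟩ + E b ⟨l, i, k⟩ := by
          simp only [hzd, hz, hg', hYd, hE]
          by_cases hk : k ∈ Set.range (e l)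
          · obtain ⟨j, rfl⟩ := hk
            rw [hat_apply _ (hinj l), hat_apply _ (hinj l)]
          · rw [hat_off _ _ _ hk, hat_off _ _ _ hk]
            rw [hrange] at hk
            simp [hg, hk]
        rw [this]
      have hEb : ∑ t, max (N t) s * E b t ^ 2 ≤ 4 / 4096 := by
        simp only [hNd, hE]
        rw [flat (fun l i k => max (ν l k) s *
          hat (e l) (fun j => τ l (e l j) * b ⟨l, i, j⟩) k ^ 2)]
        have : ∀ l i, ∑ k, max (ν l k) s * hat (e l) (fun j => τ l (e l j) * b ⟨l, i, j⟩) k ^ 2 =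
            ∑ j, 1 / (4096 * ρ ^ 2) * b ⟨l, i, j⟩ ^ 2 := by
          intro l i
          rw [hat_sum (e l) (hinj l) _ (fun k => max (ν l k) s)]
          refine Finset.sum_congr rfl fun j _ => ?_
          rw [mul_pow, ← mul_assoc, hτm]
        simp only [this]
        rw [← flat' (fun l i j => 1 / (4096 * ρ ^ 2) * b ⟨l, i, j⟩ ^ 2), ← Finset.mul_sum]
        calc _ ≤ 1 / (4096 * ρ ^ 2) * (4 * ρ ^ 2) := by gcongr
          _ = 4 / 4096 := by field_simp
      have hQb : ∑ t, max (N t) s * Q z b' t ^ 2 ≤ 16 / 4096 := by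
        simp only [hNd, hQ]
        rw [flat (fun l i k => max (ν l k) s * (τ l k * ∑ j, z ⟨l, i, j⟩ * b' ⟨l, k, j⟩) ^ 2)]
        have : ∀ l i, ∑ k, max (ν l k) s * (τ l k * ∑ j, z ⟨l, i, j⟩ * b' ⟨l, k, j⟩) ^ 2 ≤
            ∑ j, 4 / (4096 * ρ ^ 2) * z ⟨l, i, j⟩ ^ 2 := by
          intro l i
          have h1 := hb' l (fun j => z ⟨l, i, j⟩)
          calc _ = 1 / (4096 * ρ ^ 2) * ∑ k, (∑ j, b' ⟨l, k, j⟩ * z ⟨l, i, j⟩) ^ 2 := by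
                rw [Finset.mul_sum]
                refine Finset.sum_congr rfl fun k _ => ?_
                rw [mul_pow, ← mul_assoc, hτm]
                simp only [mul_comm (z _)]
            _ ≤ 1 / (4096 * ρ ^ 2) * (4 * ∑ j, z ⟨l, i, j⟩ ^ 2) := by gcongr
            _ = _ := by rw [← mul_assoc, Finset.mul_sum]; refine Finset.sum_congr rfl fun j _ => ?_; ring
        refine (Finset.sum_le_sum fun l _ => Finset.sum_le_sum fun i _ => this l i).trans ?_
        rw [← flat' (fun l i j => 4 / (4096 * ρ ^ 2) * z ⟨l, i, j⟩ ^ 2), ← Finset.mul_sum]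
        calc _ ≤ 4 / (4096 * ρ ^ 2) * (4 * ρ ^ 2) := by gcongr
          _ = 16 / 4096 := by field_simp; norm_num
      have hfin := flat_bounds Y N g' (E b) (Q z b') (fun t => hν _ _) s hs hφ
        (by intro t ht; simp only [hg', hg]; rw [if_pos ht])
        (by intro t ht; simp only [hg', hg]; rw [if_neg (not_le.2 ht)])
        hEb hQb hfb hfb'
      constructor
      · show ∑ l, frobSq (Psi z (c₂ + TV m r U τ *ᵥ b') l) ≤ ρ ^ 2
        refine le_trans (le_of_eq ?_) (hfin.2.trans hY2)
        rw [flat (fun l i k => (g' ⟨l, i, k⟩ * Y ⟨l, i, k⟩ + E b ⟨l, i, k⟩ + Q z b' ⟨l, i, k⟩) ^ 2)]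
        refine Finset.sum_congr rfl fun l _ => ?_
        rw [← frobSq_mul_orth _ (U l) (hU l)]
        simp only [frobSq, hform]
      · show ∑ l, ∑ i, ∑ k, ν l k * ((Psi z (c₂ + TV m r U τ *ᵥ b') l * U l) i k - y l i k) ^ 2 ≤ 1 / 4
        refine le_trans (le_of_eq ?_) hfin.1
        rw [flat (fun l i k => ν l k * (g' ⟨l, i, k⟩ * Y ⟨l, i, k⟩ + E b ⟨l, i, k⟩ + Q z b' ⟨l, i, k⟩
          - y l i k) ^ 2)]
        simp only [hform])
  refine le_trans ?_ hgood
  rw [← ENNReal.ofReal_mul (by positivity)]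
  refine ENNReal.ofReal_le_ofReal ?_
  rw [TV_det m r U τ hU hτ]
  have hd1 : |T₁.det| = ∏ l, ∏ k ∈ Hi l, τ l k ^ p l := by
    rw [hT₁, Matrix.det_diagonal, abs_of_pos (Finset.prod_pos fun i _ => hτ _ _), Fintype.prod_sigma]
    refine Finset.prod_congr rfl fun l _ => ?_
    rw [Fintype.prod_prod_type, Finset.prod_comm]
    simp only [Finset.prod_const, Finset.card_univ, Fintype.card_fin]
    have : Finset.univ.map ⟨e l, hinj l⟩ = Hi l := by
      ext k
      have := hrange l k
      simp only [Set.mem_range] at this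
      simp [hHi, this]
    rw [← this, Finset.prod_map]
    rfl
  have hd2 : ∏ l, ∏ k ∈ Hi l, τ l k ^ m l ≤ ∏ l, ∏ k, τ l k ^ r l := by
    refine Finset.prod_le_prod (fun l _ => Finset.prod_nonneg fun k _ => (pow_pos (hτ l k) _).le) fun l _ => ?_
    have hsplit := Finset.prod_mul_prod_compl (Hi l) (fun k => τ l k ^ r l)
    rw [← hsplit]
    have hcard : m l = r l + (Hi l)ᶜ.card := by
      have := Finset.card_add_card_compl (Hi l)
      simp only [Fintype.card_fin] at this
      exact this.symm
    have hpw : ∏ k ∈ Hi l, τ l k ^ m l = (∏ k ∈ Hi l, τ l k ^ r l) * ∏ k ∈ Hi l, τ l k ^ (Hi l)ᶜ.card := by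
      rw [← Finset.prod_mul_distrib]
      refine Finset.prod_congr rfl fun k _ => ?_
      rw [← pow_add]
      exact congrArg (fun q => τ l k ^ q) hcard
    rw [hpw]
    refine mul_le_mul_of_nonneg_left ?_ (Finset.prod_nonneg fun k _ => (pow_pos (hτ l k) _).le)
    calc ∏ k ∈ Hi l, τ l k ^ (Hi l)ᶜ.card = ∏ k ∈ Hi l, ∏ _k' ∈ (Hi l)ᶜ, τ l k := by simp
      _ = ∏ k' ∈ (Hi l)ᶜ, ∏ k ∈ Hi l, τ l k := Finset.prod_comm
      _ ≤ ∏ k' ∈ (Hi l)ᶜ, ∏ _k ∈ Hi l, τ l k' := by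
          refine Finset.prod_le_prod (fun k' _ => Finset.prod_nonneg fun k _ => (hτ l k).le) fun k' hk' => ?_
          refine Finset.prod_le_prod (fun k _ => (hτ l k).le) fun k hk => ?_
          have h1 : ν l k' < s := by simpa [hHi] using hk'
          have h2 : s ≤ ν l k := by simpa [hHi] using hk
          simp only [hτd]
          rw [max_eq_right h1.le, max_eq_left h2]
          have := Real.sqrt_pos.2 hs
          gcongr
      _ = _ := by simp [hr]
  have heq : ∏ l, ∏ k ∈ Hi l, (1 / (64 * ρ * Real.sqrt (ν l k))) ^ (p l + m l) =
      (∏ l, ∏ k ∈ Hi l, τ l k ^ p l) * ∏ l, ∏ k ∈ Hi l, τ l k ^ m l := by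
    rw [← Finset.prod_mul_distrib]
    refine Finset.prod_congr rfl fun l _ => ?_
    rw [← Finset.prod_mul_distrib]
    refine Finset.prod_congr rfl fun k hk => ?_
    have h2 : s ≤ ν l k := by simpa [hHi] using hk
    simp only [hτd]
    rw [max_eq_left h2, pow_add]
  rw [heq, hd1]
  have h0 : 0 ≤ ∏ l, ∏ k ∈ Hi l, τ l k ^ p l :=
    Finset.prod_nonneg fun l _ => Finset.prod_nonneg fun k _ => (pow_pos (hτ l k) _).le
  nlinarith [mul_le_mul_of_nonneg_left hd2 h0]

end prior

lemma theta_exists {ι : Type} [Fintype ι] (A : ι → ℝ) (hA : ∀ l, 0 ≤ A l) (c : ℝ) (hc : 0 ≤ c)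
    (h : c < ∑ l, A l) : ∃ θ : ℝ, (∃ l, θ ≤ A l) ∧
      ∑ l ∈ Finset.univ.filter (fun l => A l < θ), A l ≤ c ∧
      c < ∑ l ∈ Finset.univ.filter (fun l => A l ≤ θ), A l := by
  classical
  have hne : (Finset.univ : Finset ι).Nonempty := by
    by_contra hcon
    rw [Finset.not_nonempty_iff_eq_empty] at hcon
    rw [hcon] at h; simp at h; linarith
  set T := Finset.univ.filter
    (fun l => c < ∑ l' ∈ Finset.univ.filter (fun l' => A l' ≤ A l), A l') with hT
  have hTne : T.Nonempty := by
    obtain ⟨l, _, hl⟩ := Finset.exists_max_image Finset.univ A hne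
    refine ⟨l, ?_⟩
    simp only [hT, Finset.mem_filter, Finset.mem_univ, true_and]
    rw [Finset.filter_true_of_mem (fun x hx => hl x hx)]
    exact h
  obtain ⟨l, hl, hmin⟩ := Finset.exists_min_image T A hTne
  refine ⟨A l, ⟨l, le_rfl⟩, ?_, by simpa [hT] using hl⟩
  rcases (Finset.univ.filter (fun l' => A l' < A l)).eq_empty_or_nonempty with he | he
  · rw [he]; simpa using hc
  · obtain ⟨l', hl', hmax⟩ := Finset.exists_max_image _ A he
    have hlt : A l' < A l := by simpa using hl'
    have : l' ∉ T := fun hcon => absurd (hmin l' hcon) (not_le.2 hlt)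
    simp only [hT, Finset.mem_filter, Finset.mem_univ, true_and, not_lt] at this
    refine le_trans (Finset.sum_le_sum_of_subset_of_nonneg ?_ fun _ _ _ => hA _) this
    intro x hx
    simp only [Finset.mem_filter, Finset.mem_univ, true_and]
    exact hmax x hx

lemma exp5 : Real.exp 5 ≤ 1000 := by
  have h : Real.exp 5 = Real.exp 1 ^ 5 := by rw [← Real.exp_nat_mul]; norm_num
  rw [h]
  calc Real.exp 1 ^ 5 ≤ 3 ^ 5 := by
        gcongr
        linarith [Real.exp_one_lt_d9]
    _ ≤ 1000 := by norm_num

lemma count_layer {mm : ℕ} (P : ℝ) (hP : 2 ≤ P) (a : Fin mm → ℝ)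
    (A : ℝ) (hA : ∀ k, a k ≤ A) (k0 : Fin mm) (hk0 : a k0 = A) (θ q u : ℝ) (hq : 0 < q) (hq1 : q ≤ 1)
    (hθ : 1 / 8 ≤ θ) (hu1 : u ≤ Real.log (1 / q)) (hu2 : u ≤ Real.log (8 * θ))
    (Hi : Finset (Fin mm)) (hHi : ∀ k ∈ Hi, θ ≤ A ∧ 1 / 16 ≤ q * a k) :
    P * ∑ k ∈ Hi, (1 / 2 * Real.log (4096 * (q * a k))) +
      ((if 1 / 8 ≤ A then 5 else 0) + (if θ ≤ A then u else 0)) ≤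
    P * ∑ k ∈ Finset.univ.filter (fun k => 2 / 2000 ^ 2 ≤ a k),
      (1 / 2 * Real.log (2 * 2000 ^ 2 * a k)) := by
  have hHa : ∀ k ∈ Hi, 1 / 16 ≤ a k := by
    intro k hk
    have := (hHi k hk).2
    by_contra hcon
    push Not at hcon
    nlinarith
  set F := Finset.univ.filter (fun k => 2 / 2000 ^ 2 ≤ a k) with hF
  have hsub : Hi ⊆ F := by
    intro k hk
    simp only [hF, Finset.mem_filter, Finset.mem_univ, true_and]
    have := hHa k hk
    norm_num at this ⊢; linarith
  set β : Fin mm → ℝ := fun k => 1 / 2 * Real.log (2 * 2000 ^ 2 * a k) with hβ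
  set κ : Fin mm → ℝ := fun k => if k ∈ Hi then 1 / 2 * Real.log (4096 * (q * a k)) else 0 with hκ
  have hK : ∑ k ∈ Hi, (1 / 2 * Real.log (4096 * (q * a k))) = ∑ k ∈ F, κ k := by
    rw [hκ, Finset.sum_ite_mem, Finset.inter_eq_right.2 hsub]
  have hdiff : ∀ k ∈ F, 0 ≤ β k - κ k := by
    intro k hk
    simp only [hβ, hκ]
    have hk' : 2 / 2000 ^ 2 ≤ a k := by simpa [hF] using hk
    split_ifs with hh
    · have h1 := hHa k hh
      have h2 := (hHi k hh).2
      have : Real.log (4096 * (q * a k)) ≤ Real.log (2 * 2000 ^ 2 * a k) := by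
        apply Real.log_le_log (by linarith)
        nlinarith
      rw [sub_nonneg]
      exact mul_le_mul_of_nonneg_left this (by norm_num)
    · have : 0 ≤ Real.log (2 * 2000 ^ 2 * a k) := Real.log_nonneg (by norm_num at hk' ⊢; linarith)
      rw [sub_zero]
      exact mul_nonneg (by norm_num) this
  rw [hK]
  have hmain : ((if 1 / 8 ≤ A then 5 else 0) + (if θ ≤ A then u else 0)) ≤ P * ∑ k ∈ F, (β k - κ k) := by
    have hs0 : 0 ≤ ∑ k ∈ F, (β k - κ k) := Finset.sum_nonneg hdiff
    by_cases h8 : 1 / 8 ≤ A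
    · have hk0F : k0 ∈ F := by
        simp only [hF, Finset.mem_filter, Finset.mem_univ, true_and, hk0]
        norm_num at h8 ⊢; linarith
      have h1 : β k0 - κ k0 ≤ ∑ k ∈ F, (β k - κ k) := Finset.single_le_sum hdiff hk0F
      have h2 : 2 * (β k0 - κ k0) ≤ P * ∑ k ∈ F, (β k - κ k) := by
        have := hdiff k0 hk0F
        nlinarith
      refine le_trans ?_ h2
      rw [if_pos h8]
      simp only [hβ, hκ, hk0]
      have l5 : ∀ x : ℝ, 1000 ≤ x → 5 ≤ Real.log x := by
        intro x hx
        rw [Real.le_log_iff_exp_le (by linarith)]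
        exact exp5.trans hx
      split_ifs with h3 h4 h4
      · have hq0 : 0 < q * A := mul_pos hq (by linarith)
        have e1 : Real.log (2 * 2000 ^ 2 * A) =
            Real.log (2 * 2000 ^ 2 / 4096) + Real.log (1 / q) + Real.log (4096 * (q * A)) := by
          rw [← Real.log_mul (by norm_num) (by positivity), ← Real.log_mul (by positivity) (by positivity)]
          congr 1; field_simp
        have := l5 (2 * 2000 ^ 2 / 4096) (by norm_num)
        linarith
      · have e1 : Real.log (2 * 2000 ^ 2 / 8) + Real.log (8 * θ) ≤ Real.log (2 * 2000 ^ 2 * A) := by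
          rw [← Real.log_mul (by norm_num) (by positivity)]
          apply Real.log_le_log (by positivity)
          nlinarith
        have := l5 (2 * 2000 ^ 2 / 8) (by norm_num)
        linarith
      · exact absurd (hHi k0 h4).1 h3
      · have := l5 (2 * 2000 ^ 2 * A) (by nlinarith)
        generalize Real.log (2 * 2000 ^ 2 * A) = x at *
        linarith
    · rw [if_neg h8, if_neg (by intro hcon; exact h8 (hθ.trans hcon))]
      have : 0 ≤ P * ∑ k ∈ F, (β k - κ k) := mul_nonneg (by linarith) hs0
      linarith
  rw [Finset.sum_sub_distrib, mul_sub] at hmain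
  linarith

lemma count_total {ι : Type} [Fintype ι] (p m : ι → ℕ) (hp : ∀ l, 1 ≤ p l) (hm : ∀ l, 1 ≤ m l)
    (a : ∀ l, Fin (m l) → ℝ) (A : ι → ℝ) (hA0 : ∀ l, 0 ≤ A l)
    (hA1 : ∀ l k, a l k ≤ A l) (hA2 : ∀ l, ∃ k, a l k = A l) (θ : ℝ) (L : ℕ) (hL : Fintype.card ι = L)
    (hθ : (L : ℝ) / 4 < ∑ l ∈ Finset.univ.filter (fun l => A l ≤ θ), A l) (h : ℕ)
    (hh : (Finset.univ.filter (fun l => θ ≤ A l)).card = h) (hh1 : 1 ≤ h)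
    (Hi : ∀ l, Finset (Fin (m l))) (hHi : ∀ l, ∀ k ∈ Hi l, θ ≤ A l ∧ 1 / 16 ≤ (h : ℝ) / L * a l k) :
    ∑ l, ((p l + m l : ℕ) : ℝ) * ∑ k ∈ Hi l, (1 / 2 * Real.log (4096 * ((h : ℝ) / L * a l k))) +
      (Real.log 4 + h + h * Real.log 2 + h * Real.log ((L : ℝ) / h)) ≤
    ∑ l, ((p l + m l : ℕ) : ℝ) * ∑ k ∈ Finset.univ.filter (fun k => 2 / 2000 ^ 2 ≤ a l k),
      (1 / 2 * Real.log (2 * 2000 ^ 2 * a l k)) := by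
  classical
  have hhL : h ≤ L := by rw [← hh, ← hL]; exact Finset.card_le_univ _
  have hhp : (0 : ℝ) < h := by exact_mod_cast hh1
  have hLp : (0 : ℝ) < L := by exact_mod_cast (lt_of_lt_of_le hh1 hhL)
  have hhL' : (h : ℝ) ≤ L := by exact_mod_cast hhL
  set N := (Finset.univ.filter (fun l => 1 / 8 ≤ A l)).card with hN
  have hθ4 : 1 / 4 ≤ θ := by
    by_contra hcon
    push Not at hcon
    have : ∑ l ∈ Finset.univ.filter (fun l => A l ≤ θ), A l ≤ ∑ l : ι, (1 / 4 : ℝ) := by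
      rw [Finset.sum_filter]
      refine Finset.sum_le_sum fun l _ => ?_
      split_ifs with hx
      · linarith
      · norm_num
    rw [Finset.sum_const, Finset.card_univ, hL, nsmul_eq_mul] at this
    linarith
  have hhN : h ≤ N := by
    rw [← hh, hN]
    refine Finset.card_le_card fun l hl => ?_
    simp only [Finset.mem_filter, Finset.mem_univ, true_and] at hl ⊢
    linarith
  have hhN' : (h : ℝ) ≤ N := by exact_mod_cast hhN
  have hNp : (0 : ℝ) < N := lt_of_lt_of_le hhp hhN'
  have hNθ : (L : ℝ) / N ≤ 8 * θ := by
    have : ∑ l ∈ Finset.univ.filter (fun l => A l ≤ θ), A l ≤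
        ∑ l : ι, ((1 / 8 : ℝ) + if 1 / 8 ≤ A l then θ else 0) := by
      rw [Finset.sum_filter]
      refine Finset.sum_le_sum fun l _ => ?_
      split_ifs with hx hy hy
      · linarith
      · linarith
      · linarith
      · norm_num
    rw [Finset.sum_add_distrib, Finset.sum_const, Finset.card_univ, hL, nsmul_eq_mul,
      ← Finset.sum_filter, Finset.sum_const, nsmul_eq_mul, ← hN] at this
    rw [div_le_iff₀ hNp]
    linarith
  set u := Real.log ((L : ℝ) / N) with hu
  have hq : 0 < (h : ℝ) / L := by positivity
  have hu1 : u ≤ Real.log (1 / ((h : ℝ) / L)) := by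
    rw [one_div_div]
    apply Real.log_le_log (by positivity)
    gcongr
  have hu2 : u ≤ Real.log (8 * θ) := Real.log_le_log (by positivity) hNθ
  choose k0 hk0 using hA2
  have hlay : ∀ l, _ := fun l => count_layer (p l + m l : ℕ)
    (by have := hp l; have := hm l; norm_cast; omega) (a l) (A l) (hA1 l) (k0 l) (hk0 l) θ ((h : ℝ) / L) u hq
    (by rw [div_le_one hLp]; exact hhL') (by linarith) hu1 hu2 (Hi l) (hHi l)
  have hsum := Finset.sum_le_sum fun l (_ : l ∈ Finset.univ) => hlay l
  rw [Finset.sum_add_distrib] at hsum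
  refine le_trans ?_ hsum
  gcongr
  rw [Finset.sum_add_distrib, ← Finset.sum_filter, ← Finset.sum_filter, Finset.sum_const,
    Finset.sum_const, nsmul_eq_mul, nsmul_eq_mul, hh, ← hN]
  have e1 : u = Real.log ((L : ℝ) / h) - Real.log ((N : ℝ) / h) := by
    rw [hu, Real.log_div hLp.ne' hNp.ne', Real.log_div hLp.ne' hhp.ne', Real.log_div hNp.ne' hhp.ne']
    ring
  have e2 : h * Real.log ((N : ℝ) / h) ≤ N := by
    have := Real.log_le_sub_one_of_pos (show 0 < (N : ℝ) / h by positivity)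
    calc h * Real.log ((N : ℝ) / h) ≤ h * ((N : ℝ) / h) := by
          apply mul_le_mul_of_nonneg_left _ hhp.le; linarith
      _ = N := by field_simp
  have e3 : Real.log 4 = 2 * Real.log 2 := by
    rw [show (4 : ℝ) = 2 ^ 2 by norm_num, Real.log_pow]; norm_num
  have e4 := Real.log_two_lt_d9
  have e5 : h * Real.log 2 ≤ h := by nlinarith
  have e6 : (1 : ℝ) ≤ N := by exact_mod_cast hh1.trans hhN
  rw [e1, e3]
  nlinarith

lemma spec_exists {mm nn : ℕ} (F : Matrix (Fin mm) (Fin nn) ℝ) (c : ℝ) (hc : 0 ≤ c) :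
    ∃ (lam : Fin mm → ℝ) (U : Matrix (Fin mm) (Fin mm) ℝ), (∀ k, 0 ≤ lam k) ∧ U * Uᵀ = 1 ∧ Uᵀ * U = 1 ∧
      (∀ (pp : ℕ) (E : Matrix (Fin pp) (Fin mm) ℝ),
        c * frobSq (E * F) = ∑ i, ∑ k, lam k * (E * U) i k ^ 2) ∧
      ∃ π : Equiv.Perm (Fin mm), ∀ k, eigDesc (c • (F * Fᵀ)) k = lam (π k) := by
  set G := c • (F * Fᵀ) with hG
  have hps : G.PosSemidef := by
    have := (Matrix.posSemidef_self_mul_conjTranspose F).smul hc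
    simpa [hG] using this
  have h : G.IsHermitian := hps.1
  set U : Matrix (Fin mm) (Fin mm) ℝ := (h.eigenvectorUnitary : Matrix (Fin mm) (Fin mm) ℝ) with hU
  have hstar : star U = Uᵀ := by
    ext i j; simp [Matrix.star_apply]
  have hU1 : U * Uᵀ = 1 := by rw [← hstar]; exact Unitary.mul_star_self_of_mem h.eigenvectorUnitary.2
  have hU2 : Uᵀ * U = 1 := by rw [← hstar]; exact Unitary.star_mul_self_of_mem h.eigenvectorUnitary.2
  have hspec : G = U * Matrix.diagonal h.eigenvalues * Uᵀ := by
    have := h.spectral_theorem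
    rw [Unitary.conjStarAlgAut_apply] at this
    rw [← hstar]
    exact this
  refine ⟨h.eigenvalues, U, fun k => hps.eigenvalues_nonneg k, hU1, hU2, ?_, ?_⟩
  · intro pp E
    have e1 : c * frobSq (E * F) = (E * G * Eᵀ).trace := by
      have : E * G * Eᵀ = c • ((E * F) * (E * F)ᵀ) := by
        rw [hG, Matrix.transpose_mul]
        simp [Matrix.mul_assoc]
      rw [this, Matrix.trace_smul, smul_eq_mul]
      congr 1
      generalize E * F = B
      simp [frobSq, Matrix.trace, Matrix.mul_apply, sq]
    have e2 : E * G * Eᵀ = (E * U) * Matrix.diagonal h.eigenvalues * (E * U)ᵀ := by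
      conv_lhs => rw [hspec]
      rw [Matrix.transpose_mul]
      simp only [Matrix.mul_assoc]
    rw [e1, e2, Matrix.trace]
    refine Finset.sum_congr rfl fun i _ => ?_
    rw [Matrix.diag_apply, Matrix.mul_apply]
    refine Finset.sum_congr rfl fun k _ => ?_
    rw [Matrix.mul_diagonal, Matrix.transpose_apply]
    ring
  · refine ⟨Fin.revPerm.trans (Tuple.sort h.eigenvalues), fun k => ?_⟩
    unfold eigDesc
    rw [dif_pos h]
    rfl

lemma dEff_ge {mm : ℕ} (G : Matrix (Fin mm) (Fin mm) ℝ) (lam : Fin mm → ℝ) (hlam : ∀ k, 0 ≤ lam k)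
    (π : Equiv.Perm (Fin mm)) (hπ : ∀ k, eigDesc G k = lam (π k)) (Rh ρ ε : ℝ) (n : ℕ) (hn : 1 ≤ n)
    (hε : 0 < ε) (hρ : 0 < ρ) (hR : 2000 * (ρ / 2) ≤ Rh) :
    ∑ k ∈ Finset.univ.filter (fun k => 2 / 2000 ^ 2 ≤ lam k * ρ ^ 2 / (n * ε ^ 2)),
      (1 / 2 * Real.log (2 * 2000 ^ 2 * (lam k * ρ ^ 2 / (n * ε ^ 2)))) ≤ dEff G Rh n ε := by
  have hn' : (0 : ℝ) < n := by exact_mod_cast hn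
  have hnε : 0 < (n : ℝ) * ε ^ 2 := by positivity
  have hR2 : 2000 ^ 2 * ρ ^ 2 / 4 ≤ Rh ^ 2 := by nlinarith
  have hRp : 0 < Rh ^ 2 := lt_of_lt_of_le (by positivity) hR2
  have e : dEff G Rh n ε = ∑ k ∈ Finset.univ.filter (fun k : Fin mm => (n : ℝ) * ε ^ 2 / 2 ≤ lam k * Rh ^ 2),
      (1 / 2 * Real.log (8 * Rh ^ 2 * lam k / (n * ε ^ 2))) := by
    unfold dEff
    rw [Finset.mul_sum, Finset.sum_filter, Finset.sum_filter]
    simp only [hπ]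
    exact Equiv.sum_comp π (fun k => if (n : ℝ) * ε ^ 2 / 2 ≤ lam k * Rh ^ 2 then
      (1 / 2 * Real.log (8 * Rh ^ 2 * lam k / (n * ε ^ 2))) else 0)
  rw [e, Finset.sum_filter, Finset.sum_filter]
  refine Finset.sum_le_sum fun k _ => ?_
  have hl := hlam k
  split_ifs with h1 h2 h2
  · have hpos : 0 < lam k * ρ ^ 2 / (n * ε ^ 2) := lt_of_lt_of_le (by norm_num) h1
    apply mul_le_mul_of_nonneg_left _ (by norm_num)
    apply Real.log_le_log (by positivity)
    rw [← mul_div_assoc]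
    apply div_le_div_of_nonneg_right _ hnε.le
    nlinarith [mul_le_mul_of_nonneg_left hR2 hl]
  · exfalso
    apply h2
    rw [div_le_div_iff₀ (by norm_num) hnε] at h1
    nlinarith [mul_le_mul_of_nonneg_left hR2 hl]
  · have : 0 ≤ Real.log (8 * Rh ^ 2 * lam k / (n * ε ^ 2)) := by
      apply Real.log_nonneg
      rw [le_div_iff₀ hnε]
      nlinarith
    positivity
  · exact le_rfl

lemma scale_exists (w R : ℝ) (hw : w ≤ R) (n : ℕ) (hn : 1 ≤ n) (hR : 0 < R) :
    ∃ κ : Fin n, w ≤ R / 2 ^ (κ : ℕ) ∧ R / 2 ^ (κ : ℕ) / 2 ≤ max w (R / 2 ^ n) := by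
  suffices ∃ κ : ℕ, κ < n ∧ w ≤ R / 2 ^ κ ∧ R / 2 ^ κ / 2 ≤ max w (R / 2 ^ n) by
    obtain ⟨κ, h1, h2⟩ := this
    exact ⟨⟨κ, h1⟩, h2⟩
  induction n, hn using Nat.le_induction with
  | base => exact ⟨0, by norm_num, by simpa using hw, le_trans (by norm_num) (le_max_right _ _)⟩
  | succ n hn ih =>
    by_cases h : w ≤ R / 2 ^ n
    · refine ⟨n, by omega, h, le_trans (le_of_eq ?_) (le_max_right _ _)⟩
      rw [pow_succ]; field_simp
    · push Not at h
      obtain ⟨κ, h1, h2, h3⟩ := ih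
      rw [max_eq_left h.le] at h3
      exact ⟨κ, by omega, h2, h3.trans (le_max_left _ _)⟩

lemma mixture {J Ω : Type*} [Fintype J] [MeasurableSpace Ω] (n : ℕ) (hn : 1 ≤ n) (ω : J → ℝ)
    (hω : ∀ j, 0 ≤ ω j) (h0 : 0 < ∑ j, ω j) (h1 : ∑ j, ω j ≤ 1) (μ : Fin n → J → Measure Ω)
    (hμ : ∀ κ j, IsProbabilityMeasure (μ κ j)) :
    ∃ π : Measure Ω, IsProbabilityMeasure π ∧
      (∀ A κ j, ENNReal.ofReal (ω j / n) * μ κ j A ≤ π A) ∧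
      (∀ A κ, (∀ j, μ κ j A = 1) → ENNReal.ofReal (1 / n) ≤ π A) := by
  have hn' : (0 : ℝ) < n := by exact_mod_cast hn
  set S := ∑ j, ω j with hS
  set π : Measure Ω := ∑ κ : Fin n, ∑ j, ENNReal.ofReal (ω j / S / n) • μ κ j with hπ
  have happ : ∀ A, π A = ∑ κ : Fin n, ∑ j, ENNReal.ofReal (ω j / S / n) * μ κ j A := by
    intro A
    simp [hπ, Measure.finsetSum_apply]
  have hsum : ∑ j, ENNReal.ofReal (ω j / S / n) = ENNReal.ofReal (1 / n) := by
    rw [← ENNReal.ofReal_sum_of_nonneg (fun j _ => by have := hω j; positivity)]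
    congr 1
    rw [← Finset.sum_div, ← Finset.sum_div, div_self h0.ne']
  refine ⟨π, ⟨?_⟩, ?_, ?_⟩
  · rw [happ]
    simp only [measure_univ, mul_one, hsum]
    rw [Finset.sum_const, Finset.card_univ, Fintype.card_fin, nsmul_eq_mul,
      ← ENNReal.ofReal_natCast, ← ENNReal.ofReal_mul hn'.le, mul_one_div_cancel hn'.ne']
    simp
  · intro A κ j
    rw [happ]
    calc ENNReal.ofReal (ω j / n) * μ κ j A ≤ ENNReal.ofReal (ω j / S / n) * μ κ j A := by
          gcongr
          rw [le_div_iff₀ h0]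
          nlinarith [hω j]
      _ ≤ ∑ j, ENNReal.ofReal (ω j / S / n) * μ κ j A :=
          Finset.single_le_sum (f := fun j => ENNReal.ofReal (ω j / S / n) * μ κ j A)
            (fun _ _ => zero_le) (Finset.mem_univ j)
      _ ≤ _ := Finset.single_le_sum (f := fun κ => ∑ j, ENNReal.ofReal (ω j / S / n) * μ κ j A)
            (fun _ _ => zero_le) (Finset.mem_univ κ)
  · intro A κ hA
    rw [happ]
    calc ENNReal.ofReal (1 / n) = ∑ j, ENNReal.ofReal (ω j / S / n) * μ κ j A := by
          simp only [hA, mul_one, hsum]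
      _ ≤ _ := Finset.single_le_sum (f := fun κ => ∑ j, ENNReal.ofReal (ω j / S / n) * μ κ j A)
            (fun _ _ => zero_le) (Finset.mem_univ κ)

/-- weight of a rank vector -/
def wt (L : ℕ) (m : Fin L → ℕ) (j : Fin L × (∀ l, Fin (m l + 1))) : ℝ :=
  (1 / 2) ^ ((j.1 : ℕ) + 1) * ((∏ l, if (j.2 l : ℕ) = 0 then 1 else (((j.1 : ℕ) + 1 : ℕ) : ℝ) / L / m l) /
    (1 + (((j.1 : ℕ) + 1 : ℕ) : ℝ) / L) ^ L)

lemma wt_nonneg (L : ℕ) (m : Fin L → ℕ) (j) : 0 ≤ wt L m j := by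
  unfold wt
  refine mul_nonneg (by positivity) (div_nonneg (Finset.prod_nonneg fun l _ => ?_) (by positivity))
  split_ifs
  · norm_num
  · positivity

lemma wt_sum (L : ℕ) (hL : 1 ≤ L) (m : Fin L → ℕ) (hm : ∀ l, 1 ≤ m l) :
    0 < ∑ j, wt L m j ∧ ∑ j, wt L m j ≤ 1 := by
  have e : ∑ j, wt L m j = ∑ i : Fin L, (1 / 2 : ℝ) ^ ((i : ℕ) + 1) := by
    rw [Fintype.sum_prod_type]
    refine Finset.sum_congr rfl fun i _ => ?_
    unfold wt
    simp only
    rw [← Finset.mul_sum, ← Finset.sum_div]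
    set x : ℝ := (((i : ℕ) + 1 : ℕ) : ℝ) / L with hx
    have hx0 : 0 ≤ x := by positivity
    have h1 : ∀ l, ∑ r : Fin (m l + 1), (if (r : ℕ) = 0 then 1 else x / m l) = 1 + x := by
      intro l
      have := hm l
      have hml : (0 : ℝ) < m l := by exact_mod_cast this
      rw [Fin.sum_univ_succ]
      simp
      field_simp
    have h2 := Finset.prod_univ_sum (fun l => (Finset.univ : Finset (Fin (m l + 1))))
      (fun l r => if (r : ℕ) = 0 then (1 : ℝ) else x / m l)
    rw [Fintype.piFinset_univ] at h2
    rw [← h2]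
    simp only [h1]
    rw [Finset.prod_const, Finset.card_univ, Fintype.card_fin, div_self (by positivity), mul_one]
  rw [e]
  constructor
  · refine Finset.sum_pos (fun i _ => by positivity) ⟨⟨0, hL⟩, Finset.mem_univ _⟩
  · have h2 : ∀ L : ℕ, ∑ i ∈ Finset.range L, (1 / 2 : ℝ) ^ (i + 1) = 1 - (1 / 2) ^ L := by
      intro L
      induction L with
      | zero => simp
      | succ L ih => rw [Finset.sum_range_succ, ih]; ring
    rw [Fin.sum_univ_eq_sum_range (fun i => (1 / 2 : ℝ) ^ (i + 1)), h2]
    have : (0 : ℝ) ≤ (1 / 2) ^ L := by positivity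
    linarith

lemma wt_ge (L : ℕ) (m : Fin L → ℕ) (hm : ∀ l, 1 ≤ m l) (h : ℕ) (h1 : 1 ≤ h) (hL : h ≤ L)
    (S : Finset (Fin L)) (hS : S.card = h) (r : ∀ l, Fin (m l + 1)) (hr : ∀ l, l ∉ S → (r l : ℕ) = 0) :
    Real.exp (-(h * Real.log 2 + h + ∑ l, Real.log (m l) + h * Real.log ((L : ℝ) / h))) ≤
      wt L m (⟨h - 1, by omega⟩, r) := by
  have hh : h - 1 + 1 = h := by omega
  have hhp : (0 : ℝ) < h := by exact_mod_cast h1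
  have hLp : (0 : ℝ) < L := by exact_mod_cast (lt_of_lt_of_le h1 hL)
  have hmp : ∀ l, (0 : ℝ) < m l := fun l => by exact_mod_cast hm l
  unfold wt
  simp only [hh]
  have e : Real.exp (-(h * Real.log 2 + h + ∑ l, Real.log (m l) + h * Real.log ((L : ℝ) / h))) =
      (1 / 2) ^ h * ((∏ l, (1 / (m l : ℝ)) * (if l ∈ S then (h : ℝ) / L else 1)) / Real.exp h) := by
    rw [Finset.prod_mul_distrib, Finset.prod_ite_mem, Finset.univ_inter, Finset.prod_const, hS]
    have a1 : (1 / 2 : ℝ) ^ h = Real.exp (-(h * Real.log 2)) := by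
      rw [← mul_neg, Real.exp_nat_mul, Real.exp_neg, Real.exp_log (by norm_num)]; norm_num
    have a2 : ∏ l, (1 / (m l : ℝ)) = Real.exp (- ∑ l, Real.log (m l)) := by
      rw [← Finset.sum_neg_distrib, Real.exp_sum]
      refine Finset.prod_congr rfl fun l _ => ?_
      rw [Real.exp_neg, Real.exp_log (hmp l), one_div]
    have a3 : ((h : ℝ) / L) ^ h = Real.exp (-(h * Real.log ((L : ℝ) / h))) := by
      rw [← mul_neg, Real.exp_nat_mul, Real.exp_neg, Real.exp_log (by positivity), inv_div]
    have a4 : ∀ x : ℝ, x / Real.exp h = x * Real.exp (-h) := fun x => by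
      rw [Real.exp_neg, div_eq_mul_inv]
    rw [a1, a2, a3, a4, ← Real.exp_add, ← Real.exp_add, ← Real.exp_add]
    congr 1; ring
  rw [e]
  have hprod0 : ∀ l, 0 ≤ (1 / (m l : ℝ)) * (if l ∈ S then (h : ℝ) / L else 1) := by
    intro l; split_ifs <;> positivity
  have hhL : (h : ℝ) / L ≤ 1 := by rw [div_le_one hLp]; exact_mod_cast hL
  have hm1 : ∀ l, 1 / (m l : ℝ) ≤ 1 := fun l => by
    rw [div_le_one (hmp l)]; exact_mod_cast hm l
  apply mul_le_mul_of_nonneg_left _ (by positivity)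
  apply div_le_div₀
  · refine Finset.prod_nonneg fun l _ => ?_
    split_ifs <;> positivity
  · refine Finset.prod_le_prod (fun l _ => hprod0 l) fun l _ => ?_
    have := hm1 l
    have h0 : 0 ≤ 1 / (m l : ℝ) := by positivity
    have h0' : 0 ≤ (h : ℝ) / L := by positivity
    split_ifs with b1 b2 b2
    · nlinarith
    · apply le_of_eq; ring
    · linarith
    · exact absurd (hr l b1) b2
  · positivity
  · calc (1 + (h : ℝ) / L) ^ L ≤ (Real.exp ((h : ℝ) / L)) ^ L := by
          gcongr
          linarith [Real.add_one_le_exp ((h : ℝ) / L)]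
      _ = Real.exp h := by
          rw [← Real.exp_nat_mul]; congr 1; field_simp

lemma negLog_le {p : ℝ≥0∞} (hp : p ≤ 1) (x : ℝ) (h : ENNReal.ofReal (Real.exp (-x)) ≤ p) :
    negLog p ≤ ENNReal.ofReal x := by
  have hpt : p ≠ ⊤ := (hp.trans_lt ENNReal.one_lt_top).ne
  have h1 : Real.exp (-x) ≤ p.toReal := by
    rwa [ENNReal.ofReal_le_iff_le_toReal hpt] at h
  have h2 : 0 < p.toReal := lt_of_lt_of_le (Real.exp_pos _) h1
  have h0 : p ≠ 0 := by rintro rfl; simp at h2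
  unfold negLog
  rw [if_neg h0]
  apply ENNReal.ofReal_le_ofReal
  rw [one_div, Real.log_inv]
  have := (Real.le_log_iff_exp_le h2).2 h1
  linarith

def PhiW (d : ℕ → ℕ) (L : ℕ) (ρ : ℝ) (r : Fin L → ℕ)
    (zv : ((Σ l : Fin L, Fin (d (l + 1)) × Fin (r l)) → ℝ) × ((Σ l : Fin L, Fin (d l) × Fin (r l)) → ℝ)) :
    Weights d := fun l =>
  open Classical in
  if h : l < L ∧ ∑ l' : Fin L, frobSq (Psi (p := fun l : Fin L => d (l + 1)) (m := fun l : Fin L => d l)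
      zv.1 zv.2 l') ≤ ρ ^ 2 then
    (Psi (p := fun l : Fin L => d (l + 1)) (m := fun l : Fin L => d l) zv.1 zv.2 ⟨l, h.1⟩ :
      Matrix (Fin (d (l + 1))) (Fin (d l)) ℝ) else 0

lemma frob_psi_cont {ι : Type} [Fintype ι] [DecidableEq ι] {p m r : ι → ℕ} : Continuous (fun zv :
    ((Σ l, Fin (p l) × Fin (r l)) → ℝ) × ((Σ l, Fin (m l) × Fin (r l)) → ℝ) =>
      ∑ l, frobSq (Psi zv.1 zv.2 l)) := by
  unfold frobSq
  refine continuous_finset_sum _ fun l _ => continuous_finset_sum _ fun i _ =>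
    continuous_finset_sum _ fun k _ => ?_
  exact (psi_cont l i k).pow 2

lemma PhiW_meas (d : ℕ → ℕ) (L : ℕ) (ρ : ℝ) (r : Fin L → ℕ) : Measurable (PhiW d L ρ r) := by
  refine measurable_pi_iff.2 fun l => ?_
  refine measurable_pi_iff.2 fun i => ?_
  refine measurable_pi_iff.2 fun k => ?_
  by_cases hl : l < L
  · have e : (fun zv => PhiW d L ρ r zv l i k) = fun zv => open Classical in
        if zv ∈ {zv : ((Σ l : Fin L, Fin (d (l + 1)) × Fin (r l)) → ℝ) ×
          ((Σ l : Fin L, Fin (d l) × Fin (r l)) → ℝ) | ∑ l' : Fin L, frobSq (Psi (p := fun l : Fin L => d (l + 1))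
          (m := fun l : Fin L => d l) zv.1 zv.2 l') ≤ ρ ^ 2} then
        Psi (p := fun l : Fin L => d (l + 1)) (m := fun l : Fin L => d l) zv.1 zv.2 ⟨l, hl⟩ i k else 0 := by
      funext zv
      unfold PhiW
      by_cases h : ∑ l' : Fin L, frobSq (Psi (p := fun l : Fin L => d (l + 1))
          (m := fun l : Fin L => d l) zv.1 zv.2 l') ≤ ρ ^ 2
      · rw [dif_pos ⟨hl, h⟩]; exact (if_pos (show zv ∈ _ from h)).symm
      · rw [dif_neg (fun hh => h hh.2)]; exact (if_neg (show ¬ (zv ∈ _) from h)).symm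
    rw [e]
    refine Measurable.ite ?_ ?_ measurable_const
    · exact (isClosed_le frob_psi_cont continuous_const).measurableSet
    · exact (psi_cont (p := fun l : Fin L => d (l + 1)) (m := fun l : Fin L => d l) ⟨l, hl⟩ i k).measurable
  · have e : (fun zv => PhiW d L ρ r zv l i k) = fun zv => 0 := by
      funext zv
      unfold PhiW
      rw [dif_neg (fun hh => hl hh.1)]; rfl
    rw [e]; exact measurable_const

lemma PhiW_norm (d : ℕ → ℕ) (L : ℕ) (ρ : ℝ) (hρ : 0 < ρ) (r : Fin L → ℕ) (zv) :
    wNorm d L (PhiW d L ρ r zv) ≤ ρ := by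
  unfold wNorm
  rw [Real.sqrt_le_left hρ.le, Finset.sum_range]
  by_cases h : ∑ l' : Fin L, frobSq (Psi (p := fun l : Fin L => d (l + 1))
          (m := fun l : Fin L => d l) zv.1 zv.2 l') ≤ ρ ^ 2
  · refine le_trans (le_of_eq ?_) h
    refine Finset.sum_congr rfl fun l _ => ?_
    unfold PhiW
    rw [dif_pos ⟨l.2, h⟩]
  · have : ∀ l : Fin L, frobSq (PhiW d L ρ r zv l) = 0 := by
      intro l; unfold PhiW
      rw [dif_neg (fun hh => h hh.2)]; simp [frobSq]
    simp only [this, Finset.sum_const_zero]; positivity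

lemma PhiW_zero (d : ℕ → ℕ) (L : ℕ) (ρ : ℝ) (r : Fin L → ℕ) (zv) (l : Fin L) (hl : r l = 0) :
    PhiW d L ρ r zv l = 0 := by
  unfold PhiW
  split_ifs with h
  · ext i k
    have : IsEmpty (Fin (r l)) := by rw [hl]; infer_instance
    simp [Psi]
  · rfl

def prior (d : ℕ → ℕ) (L : ℕ) (ρ : ℝ) (r : Fin L → ℕ) : Measure (Weights d) :=
  Measure.map (PhiW d L ρ r)
    ((ProbabilityTheory.cond volume (KZ (fun l : Fin L => d (l + 1)) r ρ)).prod
      (ProbabilityTheory.cond volume (KV (fun l : Fin L => d l) r)))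

lemma prior_base (d : ℕ → ℕ) (L : ℕ) (ρ : ℝ) (hρ : 0 < ρ) (r : Fin L → ℕ) :
    IsProbabilityMeasure ((ProbabilityTheory.cond volume (KZ (fun l : Fin L => d (l + 1)) r ρ)).prod
      (ProbabilityTheory.cond volume (KV (fun l : Fin L => d l) r))) := by
  have h1 := ProbabilityTheory.cond_isProbabilityMeasure_of_finite
    (KZ_zero (fun l : Fin L => d (l + 1)) r hρ) (KZ_top _ _ _)
  have h2 := ProbabilityTheory.cond_isProbabilityMeasure_of_finite
    (KV_zero (fun l : Fin L => d l) r) (KV_top _ _)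
  infer_instance

lemma prior_prob (d : ℕ → ℕ) (L : ℕ) (ρ : ℝ) (hρ : 0 < ρ) (r : Fin L → ℕ) :
    IsProbabilityMeasure (prior d L ρ r) := by
  have := prior_base d L ρ hρ r
  exact Measure.isProbabilityMeasure_map (PhiW_meas d L ρ r).aemeasurable

lemma prior_one (d : ℕ → ℕ) (L : ℕ) (ρ : ℝ) (hρ : 0 < ρ) (r : Fin L → ℕ) (A : Set (Weights d))
    (h : ∀ zv, PhiW d L ρ r zv ∈ A) : prior d L ρ r A = 1 := by
  have := prior_base d L ρ hρ r
  have := prior_prob d L ρ hρ r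
  apply le_antisymm prob_le_one
  refine le_trans ?_ (Measure.le_map_apply (PhiW_meas d L ρ r).aemeasurable A)
  have : PhiW d L ρ r ⁻¹' A = Set.univ := Set.eq_univ_of_forall h
  rw [this, measure_univ]

lemma sum_bound {ι : Type} (S : Finset ι) (g A e : ι → ℝ) (hA : ∀ l, 0 ≤ A l)
    (he : ∀ l, 0 ≤ e l) (L N s ρ : ℝ) (hL : 0 < L) (hN : 0 ≤ N) (hρ : 0 < ρ) (hs : 0 ≤ s)
    (hg : ∀ l ∈ S, L * g l ^ 2 ≤ A l * (N / ρ ^ 2) * e l) (hAs : ∑ l ∈ S, A l ≤ L / 4)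
    (hes : ∑ l ∈ S, e l ≤ s ^ 2 * ρ ^ 2) : ∑ l ∈ S, g l ≤ s / 2 * Real.sqrt N := by
  have h := Finset.sum_sq_le_sum_mul_sum_of_sq_le_mul S (r := g) (f := fun l => A l * (N / ρ ^ 2) / L) (g := e)
    (fun l _ => by have := hA l; positivity) (fun l _ => he l) (fun l hl => by
      have := hg l hl
      rw [div_mul_eq_mul_div, le_div_iff₀ hL]; linarith)
  rw [← Finset.sum_div, ← Finset.sum_mul] at h
  have h2 : (∑ l ∈ S, g l) ^ 2 ≤ (s / 2 * Real.sqrt N) ^ 2 := by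
    refine h.trans ?_
    rw [mul_pow, Real.sq_sqrt hN]
    calc _ ≤ (L / 4) * (N / ρ ^ 2) / L * (s ^ 2 * ρ ^ 2) := by
          have : 0 ≤ ∑ l ∈ S, e l := Finset.sum_nonneg fun l _ => he l
          have h3 : 0 ≤ N / ρ ^ 2 := by positivity
          gcongr
      _ = _ := by field_simp; ring
  exact (abs_le_of_sq_le_sq' h2 (by positivity)).2

lemma frobSq_sub_le {m k : Type*} [Fintype m] [Fintype k] (A B : Matrix m k ℝ) :
    frobSq (A - B) ≤ 2 * frobSq A + 2 * frobSq B := by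
  unfold frobSq
  simp only [Finset.mul_sum, ← Finset.sum_add_distrib, Matrix.sub_apply]
  refine Finset.sum_le_sum fun i _ => Finset.sum_le_sum fun j _ => ?_
  nlinarith [sq_nonneg (A i j + B i j)]

lemma wNorm_sq {d : ℕ → ℕ} {L : ℕ} {W : Weights d} {ρ : ℝ} (hρ : 0 < ρ) (h : wNorm d L W ≤ ρ) :
    ∑ l : Fin L, frobSq (W l) ≤ ρ ^ 2 := by
  unfold wNorm at h
  rwa [Real.sqrt_le_left hρ.le, Finset.sum_range] at h

lemma case_bound (d : ℕ → ℕ) (hd : ∀ l, 1 ≤ d l) (L nn : ℕ) (hL : 1 ≤ L) (hn : 1 ≤ nn) (ρ : ℝ) (hρ : 0 < ρ)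
    (ε : ℝ) (hε : 0 < ε) (lam : ∀ l : Fin L, Fin (d l) → ℝ) (hlam : ∀ l k, 0 ≤ lam l k)
    (U : ∀ l : Fin L, Matrix (Fin (d l)) (Fin (d l)) ℝ) (hU : ∀ l, U l * (U l)ᵀ = 1)
    (hU' : ∀ l, (U l)ᵀ * U l = 1) (W : Weights d) (hW : wNorm d L W ≤ ρ) (Aset : Set (Weights d))
    (g : Weights d → Fin L → ℝ)
    (hgQ : ∀ W' l, (L : ℝ) * g W' l ^ 2 = ∑ i, ∑ k, lam l k * ((W' l - W l) * U l) i k ^ 2)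
    (hA : ∀ W', wNorm d L W' ≤ ρ → ∑ l, g W' l ≤ Real.sqrt nn * ε → W' ∈ Aset) :
    (∀ r, prior d L ρ r Aset = 1) ∨ ∃ (h : ℕ) (_ : 1 ≤ h) (_ : h ≤ L) (S : Finset (Fin L)) (_ : S.card = h)
      (r : Fin L → ℕ) (_ : ∀ l, r l ≤ d l) (_ : ∀ l, l ∉ S → r l = 0) (x : ℝ),
      ENNReal.ofReal (Real.exp (-x)) ≤ prior d L ρ r Aset ∧
      x + (h + h * Real.log 2 + h * Real.log ((L : ℝ) / h)) ≤
        ∑ l : Fin L, ((d (l + 1) + d l : ℕ) : ℝ) *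
          ∑ k ∈ Finset.univ.filter (fun k => 2 / 2000 ^ 2 ≤ lam l k * ρ ^ 2 / (nn * ε ^ 2)),
          (1 / 2 * Real.log (2 * 2000 ^ 2 * (lam l k * ρ ^ 2 / (nn * ε ^ 2)))) := by
  classical
  have hn' : (0 : ℝ) < nn := by exact_mod_cast hn
  have hL' : (0 : ℝ) < L := by exact_mod_cast hL
  set N : ℝ := nn * ε ^ 2 with hN
  have hNp : 0 < N := by positivity
  have hsN : Real.sqrt N = Real.sqrt nn * ε := by
    rw [hN, Real.sqrt_mul hn'.le, Real.sqrt_sq hε.le]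
  set a : ∀ l : Fin L, Fin (d l) → ℝ := fun l k => lam l k * ρ ^ 2 / N with ha
  have ha0 : ∀ l k, 0 ≤ a l k := fun l k => by have := hlam l k; simp only [ha]; positivity
  have hmax : ∀ l : Fin L, ∃ k, ∀ k', a l k' ≤ a l k := by
    intro l
    haveI : Nonempty (Fin (d l)) := ⟨⟨0, hd l⟩⟩
    exact Finite.exists_max (a l)
  choose km hkm using hmax
  set A : Fin L → ℝ := fun l => a l (km l) with hAdef
  have hA0 : ∀ l, 0 ≤ A l := fun l => ha0 l _
  have hlama : ∀ l k, lam l k = a l k * (N / ρ ^ 2) := by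
    intro l k; simp only [ha]; field_simp
  -- frobenius bound
  have hgA : ∀ W' l, (L : ℝ) * g W' l ^ 2 ≤ A l * (N / ρ ^ 2) * frobSq (W' l - W l) := by
    intro W' l
    rw [hgQ, ← frobSq_mul_orth (W' l - W l) (U l) (hU l)]
    conv_rhs => unfold frobSq
    rw [Finset.mul_sum]
    refine Finset.sum_le_sum fun i _ => ?_
    rw [Finset.mul_sum]
    refine Finset.sum_le_sum fun k _ => ?_
    rw [hlama]
    have h1 := hkm l k
    have h3 : 0 ≤ N / ρ ^ 2 := by positivity
    gcongr
  have hWs := wNorm_sq hρ hW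
  by_cases hcase : ∑ l, A l ≤ (L : ℝ) / 4
  · left
    intro r
    apply prior_one d L ρ hρ r
    intro zv
    have hw' := PhiW_norm d L ρ hρ r zv
    apply hA _ hw'
    have hws' := wNorm_sq hρ hw'
    have := sum_bound Finset.univ (g (PhiW d L ρ r zv)) A (fun l => frobSq (PhiW d L ρ r zv l - W l)) hA0
      (fun l => frobSq_nonneg _) L N 2 ρ hL' hNp.le hρ (by norm_num) (fun l _ => hgA _ l) hcase (by
        calc _ ≤ ∑ l : Fin L, (2 * frobSq (PhiW d L ρ r zv l) + 2 * frobSq (W l)) :=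
              Finset.sum_le_sum fun l _ => frobSq_sub_le _ _
          _ ≤ _ := by
              rw [Finset.sum_add_distrib, ← Finset.mul_sum, ← Finset.mul_sum]; linarith)
    rw [← hsN]; linarith
  · right
    push Not at hcase
    obtain ⟨θ, ⟨l0, hl0⟩, hlow, hhigh⟩ := theta_exists A hA0 ((L : ℝ) / 4) (by positivity) hcase
    set S := Finset.univ.filter (fun l => θ ≤ A l) with hS
    set h := S.card with hh
    have hh1 : 1 ≤ h := Finset.card_pos.2 ⟨l0, by simp [hS, hl0]⟩
    have hhL : h ≤ L := by
      have := Finset.card_le_univ S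
      simpa using this
    have hhp : (0 : ℝ) < h := by exact_mod_cast hh1
    set ν : ∀ l : Fin L, Fin (d l) → ℝ := fun l k => if l ∈ S then (h : ℝ) / L * (lam l k / N) else 0 with hν
    have hν0 : ∀ l k, 0 ≤ ν l k := by
      intro l k
      have := hlam l k
      by_cases hl : l ∈ S
      · simp only [hν, if_pos hl]; exact mul_nonneg (div_nonneg hhp.le hL'.le) (div_nonneg this hNp.le)
      · simp only [hν, if_neg hl]; exact le_rfl
    set y : ∀ l : Fin L, Matrix (Fin (d (l + 1))) (Fin (d l)) ℝ := fun l => W l * U l with hy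
    -- deterministic goodness
    have hgood : ∀ W' : Weights d, wNorm d L W' ≤ ρ → (∀ l : Fin L, l ∉ S → W' l = 0) →
        ∑ l, ∑ i, ∑ k, ν l k * ((W' l * U l) i k - y l i k) ^ 2 ≤ 1 / 4 → W' ∈ Aset := by
      intro W' hw' hz hq
      apply hA W' hw'
      rw [← Finset.sum_filter_add_sum_filter_not Finset.univ (fun l => θ ≤ A l)]
      have p1 : ∑ l ∈ S, g W' l ≤ 1 / 2 * Real.sqrt N := by
        have hcs := sq_sum_le_card_mul_sum_sq (s := S) (f := g W')
        have hq2 : (h : ℝ) * ∑ l ∈ S, g W' l ^ 2 ≤ N / 4 := by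
          have hle : ∑ l ∈ S, ∑ i, ∑ k, ν l k * ((W' l * U l) i k - y l i k) ^ 2 ≤ 1 / 4 := by
            refine le_trans (Finset.sum_le_univ_sum_of_nonneg fun l => ?_) hq
            exact Finset.sum_nonneg fun i _ => Finset.sum_nonneg fun k _ =>
              mul_nonneg (hν0 l k) (sq_nonneg _)
          have heq : ∑ l ∈ S, ∑ i, ∑ k, ν l k * ((W' l * U l) i k - y l i k) ^ 2
              = (h / N) * ∑ l ∈ S, g W' l ^ 2 := by
            rw [Finset.mul_sum]
            refine Finset.sum_congr rfl fun l hl => ?_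
            have e1 : g W' l ^ 2 = 1 / L * ((L : ℝ) * g W' l ^ 2) := by field_simp
            rw [e1, hgQ, Finset.mul_sum, Finset.mul_sum]
            refine Finset.sum_congr rfl fun i _ => ?_
            rw [Finset.mul_sum, Finset.mul_sum]
            refine Finset.sum_congr rfl fun k _ => ?_
            simp only [hν, if_pos hl, hy, Matrix.sub_mul, Matrix.sub_apply]
            field_simp
          rw [heq, div_mul_eq_mul_div, div_le_iff₀ hNp] at hle
          linarith
        have h2 : (∑ l ∈ S, g W' l) ^ 2 ≤ (1 / 2 * Real.sqrt N) ^ 2 := by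
          rw [mul_pow, Real.sq_sqrt hNp.le]
          linarith
        exact (abs_le_of_sq_le_sq' h2 (by positivity)).2
      have p2 := sum_bound (Finset.univ.filter (fun l => ¬ θ ≤ A l)) (g W') A (fun l => frobSq (W l)) hA0
        (fun l => frobSq_nonneg _) L N 1 ρ hL' hNp.le hρ (by norm_num) (fun l hl => by
          have h1 := hgA W' l
          rw [hz l (by simpa [hS] using hl), zero_sub] at h1
          have : frobSq (-W l) = frobSq (W l) := by simp [frobSq]
          rwa [this] at h1) (by simpa only [not_le] using hlow) (by
          refine le_trans (Finset.sum_le_univ_sum_of_nonneg fun l => frobSq_nonneg _) ?_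
          linarith)
      rw [← hsN]; linarith
    have hcount := fun Hi hHi => count_total (fun l : Fin L => d (l + 1)) (fun l : Fin L => d l)
      (fun l => hd _) (fun l => hd _) a A hA0 hkm (fun l => ⟨km l, rfl⟩) θ L (by simp) hhigh h hh.symm hh1 Hi hHi
    by_cases hya : ∑ l, ∑ i, ∑ k, ν l k * y l i k ^ 2 ≤ 1 / 64
    · refine ⟨h, hh1, hhL, S, hh.symm, fun _ => 0, fun _ => Nat.zero_le _, fun _ _ => rfl, 0, ?_, ?_⟩
      · rw [prior_one d L ρ hρ (fun _ => 0) Aset]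
        · simp
        · intro zv
          apply hgood _ (PhiW_norm d L ρ hρ _ zv) (fun l _ => PhiW_zero d L ρ _ zv l rfl)
          simp only [PhiW_zero d L ρ (fun _ => 0) zv _ rfl, Matrix.zero_mul, Matrix.zero_apply, zero_sub, neg_sq]
          linarith
      · have := hcount (fun _ => ∅) (by simp)
        simp only [Finset.sum_empty, mul_zero, Finset.sum_const_zero, zero_add] at this
        have h4 : 0 ≤ Real.log 4 := Real.log_nonneg (by norm_num)
        linarith
    · push Not at hya
      have hY : ∑ l, frobSq (y l) ≤ ρ ^ 2 := by
        refine le_trans (le_of_eq ?_) hWs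
        exact Finset.sum_congr rfl fun l _ => frobSq_mul_orth _ _ (hU l)
      obtain ⟨Hi, hHi, hmass⟩ := core_mass (fun l : Fin L => d (l + 1)) (fun l : Fin L => d l) U hU hU' y ν hν0 ρ hρ
        hY hya
      have hHS : ∀ l, ∀ k ∈ Hi l, l ∈ S := by
        intro l k hk
        by_contra hl
        have := hHi l k hk
        simp only [hν, if_neg hl] at this
        norm_num at this
      have hνa : ∀ l, l ∈ S → ∀ k, ν l k * ρ ^ 2 = (h : ℝ) / L * a l k := by
        intro l hl k
        simp only [hν, if_pos hl, ha]; ring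
      have hc := hcount Hi (fun l k hk => ⟨by simpa [hS] using hHS l k hk, by
        rw [← hνa l (hHS l k hk)]; exact hHi l k hk⟩)
      refine ⟨h, hh1, hhL, S, hh.symm, fun l => (Hi l).card, fun l => ?_, fun l hl => ?_,
        Real.log 4 + ∑ l : Fin L, ((d (l + 1) + d l : ℕ) : ℝ) *
          ∑ k ∈ Hi l, (1 / 2 * Real.log (4096 * ((h : ℝ) / L * a l k))), ?_, by linarith⟩
      · simpa using Finset.card_le_univ (Hi l)
      · rw [Finset.card_eq_zero, Finset.eq_empty_iff_forall_notMem]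
        exact fun k hk => hl (hHS l k hk)
      · have e : Real.exp (-(Real.log 4 + ∑ l : Fin L, ((d (l + 1) + d l : ℕ) : ℝ) *
          ∑ k ∈ Hi l, (1 / 2 * Real.log (4096 * ((h : ℝ) / L * a l k))))) =
          1 / 4 * ∏ l : Fin L, ∏ k ∈ Hi l, (1 / (64 * ρ * Real.sqrt (ν l k))) ^ (d (l + 1) + d l) := by
          rw [neg_add, Real.exp_add, Real.exp_neg, Real.exp_log (by norm_num), ← Finset.sum_neg_distrib,
            Real.exp_sum, ← one_div]
          congr 1
          refine Finset.prod_congr rfl fun l _ => ?_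
          rw [← mul_neg, Real.exp_nat_mul, Finset.prod_pow, ← Finset.sum_neg_distrib, Real.exp_sum]
          congr 1
          refine Finset.prod_congr rfl fun k hk => ?_
          have hpos : 0 < ν l k * ρ ^ 2 := lt_of_lt_of_le (by norm_num) (hHi l k hk)
          rw [← hνa l (hHS l k hk), Real.exp_neg, one_div (64 * ρ * _)]
          congr 1
          have e2 : 4096 * (ν l k * ρ ^ 2) = (64 * ρ) ^ 2 * ν l k := by ring
          have e3 : 1 / 2 * Real.log (4096 * (ν l k * ρ ^ 2)) = Real.log (Real.sqrt (4096 * (ν l k * ρ ^ 2))) := by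
            rw [Real.log_sqrt (mul_pos (by norm_num) hpos).le]; ring
          rw [e3, Real.exp_log (Real.sqrt_pos.2 (mul_pos (by norm_num) hpos)), e2, Real.sqrt_mul (by positivity),
            Real.sqrt_sq (by positivity)]
        rw [e]
        refine le_trans hmass ?_
        refine le_trans (measure_mono ?_) (Measure.le_map_apply (PhiW_meas d L ρ _).aemeasurable Aset)
        intro zv hzv
        obtain ⟨hz1, hz2⟩ := hzv
        apply hgood _ (PhiW_norm d L ρ hρ _ zv)
        · intro l hl
          apply PhiW_zero
          rw [Finset.card_eq_zero, Finset.eq_empty_iff_forall_notMem]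
          exact fun k hk => hl (hHS l k hk)
        · refine le_trans (le_of_eq ?_) hz2
          refine Finset.sum_congr rfl fun l _ => ?_
          have : PhiW d L ρ (fun l => (Hi l).card) zv l = Psi (p := fun l : Fin L => d (l + 1))
              (m := fun l : Fin L => d l) zv.1 zv.2 l := by
            unfold PhiW
            rw [dif_pos ⟨l.2, hz1⟩]
          rw [this]

/-- **Riemannian Dimension Bound for DNN (Theorem).** -/
theorem riemannian_dimension_bound_for_dnn :
    ∃ C : ℝ, 0 < C ∧
      ∀ (d : ℕ → ℕ), (∀ l, 1 ≤ d l) → ∀ (L nn : ℕ), 1 ≤ L → 1 ≤ nn →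
      ∀ (σ : (l : ℕ) → ((Fin (d (l + 1)) → ℝ) → Fin (d (l + 1)) → ℝ)),
      (∀ (l : ℕ) (u v : Fin (d (l + 1)) → ℝ),
        ∑ i, (σ l u i - σ l v i) ^ 2 ≤ ∑ i, (u i - v i) ^ 2) →
      ∀ (X : Matrix (Fin (d 0)) (Fin nn) ℝ) (R : ℝ), 0 < R →
      ∀ (M : Weights d → ℝ → ℕ → ℝ), (∀ W ε l, 0 ≤ M W ε l) →
      -- local Lipschitz property of the outer maps
      (∀ W : Weights d, wNorm d L W ≤ R → ∀ ε : ℝ, 0 < ε →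
        ∀ W' : Weights d, wNorm d L W' ≤ R → rhoN d L nn σ X W W' ≤ ε → ∀ j, j < L →
          Real.sqrt (frobSq
              (iterNet d nn σ W' (j + 1)
                  (mapCols (σ j) (W' j * feat d nn σ W X j)) (L - (j + 1)) -
                iterNet d nn σ W' (j + 1)
                  (mapCols (σ j) (W j * feat d nn σ W X j)) (L - (j + 1)))) ≤
            M W ε j * Real.sqrt (frobSq
              (mapCols (σ j) (W' j * feat d nn σ W X j) -
                mapCols (σ j) (W j * feat d nn σ W X j)))) →
      ∃ π : Measure (Weights d), IsProbabilityMeasure π ∧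
        ∀ W : Weights d, wNorm d L W ≤ R → ∀ ε : ℝ, 0 < ε →
          negLog (π {W' | rhoN d L nn σ X W W' ≤ ε}) ≤
            ENNReal.ofReal (∑ j ∈ Finset.range L,
              ((d (j + 1) : ℝ) *
                  dEff ((L * M W ε j ^ 2) •
                      (feat d nn σ W X j * (feat d nn σ W X j)ᵀ))
                    (C * max (wNorm d L W) (R / 2 ^ nn)) nn ε +
                (d j : ℝ) *
                  dEff ((L * M W ε j ^ 2) •
                      (feat d nn σ W X j * (feat d nn σ W X j)ᵀ))
                    (C * max (wNorm d L W) (R / 2 ^ nn)) nn ε +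
                Real.log (d j) + Real.log nn)) := by
  refine ⟨2000, by norm_num, ?_⟩
  intro d hd L nn hL hn σ hσ X R hR M hM hLip
  have hn' : (0 : ℝ) < nn := by exact_mod_cast hn
  have hL' : (1 : ℝ) ≤ L := by exact_mod_cast hL
  have hρp : ∀ κ : Fin nn, 0 < R / 2 ^ (κ : ℕ) := fun κ => by positivity
  obtain ⟨hw0, hw1⟩ := wt_sum L hL (fun l : Fin L => d l) (fun l => hd l)
  obtain ⟨π, hπ, hmix, hmix1⟩ := mixture nn hn (wt L (fun l : Fin L => d l)) (wt_nonneg L _) hw0 hw1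
    (fun κ j => prior d L (R / 2 ^ (κ : ℕ)) (fun l => (j.2 l : ℕ)))
    (fun κ j => prior_prob d L _ (hρp κ) _)
  refine ⟨π, hπ, ?_⟩
  intro W hW ε hε
  obtain ⟨κ, hκ1, hκ2⟩ := scale_exists (wNorm d L W) R hW nn hn hR
  set ρ := R / 2 ^ (κ : ℕ) with hρdef
  have hρ : 0 < ρ := hρp κ
  have hρR : ρ ≤ R := by
    rw [hρdef]; exact div_le_self hR.le (one_le_pow₀ (by norm_num))
  have hspec := fun l : Fin L => spec_exists (feat d nn σ W X l) (L * M W ε l ^ 2) (by positivity)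
  choose lam U hlam hU hU' hE perm hperm using hspec
  set Aset : Set (Weights d) := {W' | rhoN d L nn σ X W W' ≤ ε} with hAset
  have hcb := case_bound d hd L nn hL hn ρ hρ ε hε lam hlam U hU hU' W hκ1 Aset
    (fun W' l => M W ε l * Real.sqrt (frobSq ((W' l - W l) * feat d nn σ W X l)))
    (fun W' l => by
      rw [← hE l, mul_pow, Real.sq_sqrt (frobSq_nonneg _)]; ring)
    (fun W' hw' hs => net_good L hn hσ X R hR (M W ε) (hM W ε) W hW ε hε (hLip W hW ε hε) W'
      (hw'.trans hρR) (by rw [Finset.sum_range]; exact hs))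
  have hdeff := fun l : Fin L => dEff_ge _ (lam l) (hlam l) (perm l) (hperm l)
    (2000 * max (wNorm d L W) (R / 2 ^ nn)) ρ ε nn hn hε hρ (by linarith)
  set T : Fin L → ℝ := fun l =>
    ∑ k ∈ Finset.univ.filter (fun k => 2 / 2000 ^ 2 ≤ lam l k * ρ ^ 2 / (nn * ε ^ 2)),
      (1 / 2 * Real.log (2 * 2000 ^ 2 * (lam l k * ρ ^ 2 / (nn * ε ^ 2)))) with hT
  have hT0 : ∀ l, 0 ≤ T l := by
    intro l
    refine Finset.sum_nonneg fun k hk => ?_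
    have hk := (Finset.mem_filter.1 hk).2
    refine mul_nonneg (by norm_num) (Real.log_nonneg ?_)
    generalize lam l k * ρ ^ 2 / (nn * ε ^ 2) = q at hk
    norm_num at hk ⊢
    linarith
  have hlogd : ∀ l : ℕ, 0 ≤ Real.log (d l) := fun l => Real.log_nonneg (by exact_mod_cast hd l)
  have hlogn : 0 ≤ Real.log nn := Real.log_nonneg (by exact_mod_cast hn)
  have hbudget : ∑ l : Fin L, ((d (l + 1) + d l : ℕ) : ℝ) * T l + ∑ l : Fin L, Real.log (d l) + Real.log nn ≤
      ∑ j ∈ Finset.range L,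
              ((d (j + 1) : ℝ) *
                  dEff ((L * M W ε j ^ 2) •
                      (feat d nn σ W X j * (feat d nn σ W X j)ᵀ))
                    (2000 * max (wNorm d L W) (R / 2 ^ nn)) nn ε +
                (d j : ℝ) *
                  dEff ((L * M W ε j ^ 2) •
                      (feat d nn σ W X j * (feat d nn σ W X j)ᵀ))
                    (2000 * max (wNorm d L W) (R / 2 ^ nn)) nn ε +
                Real.log (d j) + Real.log nn) := by
    rw [Finset.sum_range]
    calc _ ≤ ∑ l : Fin L, ((d (l + 1) + d l : ℕ) : ℝ) * T l + ∑ l : Fin L, Real.log (d l) +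
          ∑ l : Fin L, Real.log nn := by
          rw [Finset.sum_const, Finset.card_univ, Fintype.card_fin, nsmul_eq_mul]
          nlinarith
      _ ≤ _ := by
          rw [← Finset.sum_add_distrib, ← Finset.sum_add_distrib]
          refine Finset.sum_le_sum fun l _ => ?_
          have h1 := mul_le_mul_of_nonneg_left (hdeff l) (Nat.cast_nonneg (α := ℝ) (d (l + 1)))
          have h2 := mul_le_mul_of_nonneg_left (hdeff l) (Nat.cast_nonneg (α := ℝ) (d l))
          push_cast
          rw [add_mul]
          exact add_le_add (add_le_add (add_le_add h1 h2) le_rfl) le_rfl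
  refine le_trans ?_ (ENNReal.ofReal_le_ofReal hbudget)
  apply negLog_le prob_le_one
  rcases hcb with hcb | ⟨h, hh1, hhL, S, hS, r, hr, hr0, x, hx1, hx2⟩
  · refine le_trans (ENNReal.ofReal_le_ofReal ?_) (hmix1 Aset κ (fun j => hcb _))
    have hs1 : 0 ≤ ∑ l : Fin L, ((d (l + 1) + d l : ℕ) : ℝ) * T l :=
      Finset.sum_nonneg fun l _ => mul_nonneg (Nat.cast_nonneg _) (hT0 l)
    have hs2 : 0 ≤ ∑ l : Fin L, Real.log (d l) := Finset.sum_nonneg fun l _ => hlogd l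
    calc _ ≤ Real.exp (- Real.log nn) := Real.exp_le_exp.2 (by linarith)
      _ = _ := by rw [Real.exp_neg, Real.exp_log hn', one_div]
  · have hwt := wt_ge L (fun l : Fin L => d l) (fun l => hd l) h hh1 hhL S hS
      (fun l => ⟨r l, Nat.lt_succ_of_le (hr l)⟩) hr0
    refine le_trans ?_ (hmix Aset κ (⟨h - 1, by omega⟩, fun l => ⟨r l, Nat.lt_succ_of_le (hr l)⟩))
    refine le_trans ?_ (mul_le_mul' (ENNReal.ofReal_le_ofReal (div_le_div_of_nonneg_right hwt hn'.le)) hx1)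
    rw [← ENNReal.ofReal_mul (by positivity)]
    apply ENNReal.ofReal_le_ofReal
    have e : ∀ u : ℝ, Real.exp u / nn = Real.exp (u + - Real.log nn) := fun u => by
      rw [Real.exp_add, Real.exp_neg, Real.exp_log hn', div_eq_mul_inv]
    rw [e, ← Real.exp_add]
    apply Real.exp_le_exp.2
    have hx3 : x + (h + h * Real.log 2 + h * Real.log ((L : ℝ) / h)) ≤
      ∑ l : Fin L, ((d (l + 1) + d l : ℕ) : ℝ) * T l := hx2
    clear hx2
    generalize ∑ l : Fin L, ((d (l + 1) + d l : ℕ) : ℝ) * T l = s1 at hx3 ⊢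
    generalize ∑ l : Fin L, Real.log (d l) = s2
    generalize Real.log ((L : ℝ) / h) = s3 at hx3 ⊢
    generalize (h : ℝ) * s3 = s4 at hx3 ⊢
    generalize (h : ℝ) * Real.log 2 = s5 at hx3 ⊢
    linarith

end
end

section
/- Non-Perturbative Decomposition of the Projector Difference (Lemma). Fix integers 1 ≤ r < d. Let E₁ := (I_r; 0) ∈ ℝ^{d×r} and E₂ := (0; I_{d−r}) ∈ ℝ^{d×(d−r)} be the block-identity matrices (blocks stacked vertically). For X ∈ ℝ^{(d−r)×r}, set A(X) := (I_r; X) ∈ ℝ^{d×r}, M(X) := (I_r + XᵀX)^{−1}, and P(X) := A(X)·M(X)·A(X)ᵀ, which is the orthogonal projection matrix onto the column span of A(X). Then for all X, X' ∈ ℝ^{(d−r)×r}: P(X) − P(X') = (I_d − P(X))·E₂·(X − X')·E₁ᵀ·P(X') + P(X)·E₁·(X − X')ᵀ·E₂ᵀ·(I_d − P(X')). -/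
open scoped Matrix

noncomputable section

/-- The block-identity matrix `E₁ = (I_r; 0) ∈ ℝ^{d×r}`, where the `d`-dimensional
index set is presented as `Fin r ⊕ Fin s` with `s = d − r`. -/
def E1 (r s : ℕ) : Matrix (Fin r ⊕ Fin s) (Fin r) ℝ :=
  Matrix.of fun i j => Sum.casesOn i (fun a => if a = j then (1 : ℝ) else 0) (fun _ => 0)

/-- The block-identity matrix `E₂ = (0; I_{d−r}) ∈ ℝ^{d×(d−r)}`. -/
def E2 (r s : ℕ) : Matrix (Fin r ⊕ Fin s) (Fin s) ℝ :=
  Matrix.of fun i j => Sum.casesOn i (fun _ => (0 : ℝ)) (fun b => if b = j then 1 else 0)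

/-- `A(X) = (I_r; X) ∈ ℝ^{d×r}`. -/
def Amat (r s : ℕ) (X : Matrix (Fin s) (Fin r) ℝ) : Matrix (Fin r ⊕ Fin s) (Fin r) ℝ :=
  E1 r s + E2 r s * X

/-- `M(X) = (I_r + XᵀX)⁻¹`. -/
def Mmat (r s : ℕ) (X : Matrix (Fin s) (Fin r) ℝ) : Matrix (Fin r) (Fin r) ℝ :=
  (1 + Xᵀ * X)⁻¹

/-- `P(X) = A(X)·M(X)·A(X)ᵀ`, the orthogonal projection onto the column span of `A(X)`. -/
def Pproj (r s : ℕ) (X : Matrix (Fin s) (Fin r) ℝ) :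
    Matrix (Fin r ⊕ Fin s) (Fin r ⊕ Fin s) ℝ :=
  Amat r s X * Mmat r s X * (Amat r s X)ᵀ

theorem aux_E11 (r s : ℕ) : (E1 r s)ᵀ * E1 r s = 1 := by
  ext i j
  simp [E1, Matrix.mul_apply, Fintype.sum_sum_type, Matrix.one_apply, eq_comm]

theorem aux_E12 (r s : ℕ) : (E1 r s)ᵀ * E2 r s = 0 := by
  ext i j
  simp [E1, E2, Matrix.mul_apply, Fintype.sum_sum_type]

theorem aux_E21 (r s : ℕ) : (E2 r s)ᵀ * E1 r s = 0 := by
  ext i j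
  simp [E1, E2, Matrix.mul_apply, Fintype.sum_sum_type]

theorem aux_E22 (r s : ℕ) : (E2 r s)ᵀ * E2 r s = 1 := by
  ext i j
  simp [E2, Matrix.mul_apply, Fintype.sum_sum_type, Matrix.one_apply, eq_comm]

theorem aux_E1A (r s : ℕ) (X : Matrix (Fin s) (Fin r) ℝ) : (E1 r s)ᵀ * Amat r s X = 1 := by
  rw [Amat, Matrix.mul_add, ← Matrix.mul_assoc, aux_E11, aux_E12]; simp

theorem aux_AE1 (r s : ℕ) (X : Matrix (Fin s) (Fin r) ℝ) : (Amat r s X)ᵀ * E1 r s = 1 := by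
  have h := congrArg Matrix.transpose (aux_E1A r s X)
  simpa using h

theorem aux_AA (r s : ℕ) (X : Matrix (Fin s) (Fin r) ℝ) :
    (Amat r s X)ᵀ * Amat r s X = 1 + Xᵀ * X := by
  have h : (E2 r s)ᵀ * Amat r s X = X := by
    rw [Amat, Matrix.mul_add, ← Matrix.mul_assoc, aux_E21, aux_E22]; simp
  conv_lhs => rw [Amat]
  rw [Matrix.transpose_add, Matrix.transpose_mul, Matrix.add_mul, Matrix.mul_assoc]
  change (E1 r s)ᵀ * Amat r s X + Xᵀ * ((E2 r s)ᵀ * Amat r s X) = _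
  rw [aux_E1A, h]

theorem aux_unit (r s : ℕ) (X : Matrix (Fin s) (Fin r) ℝ) : IsUnit (1 + Xᵀ * X).det := by
  have h : (1 + Xᵀ * X).PosDef := by
    have h2 := Matrix.posSemidef_conjTranspose_mul_self X
    rw [Matrix.conjTranspose_eq_transpose_of_trivial] at h2
    exact Matrix.PosDef.one.add_posSemidef h2
  exact h.det_pos.ne'.isUnit

theorem aux_PA (r s : ℕ) (X : Matrix (Fin s) (Fin r) ℝ) :
    Pproj r s X * Amat r s X = Amat r s X := by
  rw [Pproj, Matrix.mul_assoc, aux_AA, Mmat, Matrix.mul_assoc,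
    Matrix.nonsing_inv_mul _ (aux_unit r s X), Matrix.mul_one]

theorem aux_AP (r s : ℕ) (X : Matrix (Fin s) (Fin r) ℝ) :
    (Amat r s X)ᵀ * Pproj r s X = (Amat r s X)ᵀ := by
  rw [Pproj, ← Matrix.mul_assoc, ← Matrix.mul_assoc, aux_AA, Mmat,
    Matrix.mul_nonsing_inv _ (aux_unit r s X), Matrix.one_mul]

theorem aux_E1P (r s : ℕ) (X : Matrix (Fin s) (Fin r) ℝ) :
    (E1 r s)ᵀ * Pproj r s X = Mmat r s X * (Amat r s X)ᵀ := by
  rw [Pproj, ← Matrix.mul_assoc, ← Matrix.mul_assoc, aux_E1A, Matrix.one_mul]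

theorem aux_PE1 (r s : ℕ) (X : Matrix (Fin s) (Fin r) ℝ) :
    Pproj r s X * E1 r s = Amat r s X * Mmat r s X := by
  rw [Pproj, Matrix.mul_assoc, aux_AE1, Matrix.mul_one]

theorem aux_sub (r s : ℕ) (X X' : Matrix (Fin s) (Fin r) ℝ) :
    E2 r s * (X - X') = Amat r s X - Amat r s X' := by
  rw [Amat, Amat, Matrix.mul_sub]; abel

/-- **Non-Perturbative Decomposition of the Projector Difference (Lemma).** -/
theorem nonperturbative_decomposition_of_projector_difference
    (r s : ℕ) (hr : 1 ≤ r) (hs : 1 ≤ s) :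
    ∀ X X' : Matrix (Fin s) (Fin r) ℝ,
      Pproj r s X - Pproj r s X' =
        (1 - Pproj r s X) * E2 r s * (X - X') * (E1 r s)ᵀ * Pproj r s X' +
          Pproj r s X * E1 r s * (X - X')ᵀ * (E2 r s)ᵀ * (1 - Pproj r s X') := by
  intro X X'
  have h1 : (1 - Pproj r s X) * E2 r s * (X - X') * (E1 r s)ᵀ * Pproj r s X' =
      -((1 - Pproj r s X) * Pproj r s X') := by
    rw [Matrix.mul_assoc _ (E1 r s)ᵀ, aux_E1P, Matrix.mul_assoc _ (E2 r s), aux_sub,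
      Matrix.mul_sub, Matrix.sub_mul 1 _ (Amat r s X), aux_PA, Matrix.one_mul, sub_self,
      zero_sub, Matrix.neg_mul]
    conv_rhs => rw [Pproj.eq_def r s X']
    simp only [Matrix.mul_assoc]
  have h2 : Pproj r s X * E1 r s * (X - X')ᵀ * (E2 r s)ᵀ * (1 - Pproj r s X') =
      Pproj r s X * (1 - Pproj r s X') := by
    rw [aux_PE1, Matrix.mul_assoc _ (X - X')ᵀ, ← Matrix.transpose_mul, aux_sub,
      Matrix.transpose_sub, Matrix.mul_assoc, Matrix.sub_mul,
      Matrix.mul_sub (Amat r s X')ᵀ, aux_AP, Matrix.mul_one, sub_self, sub_zero]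
    conv_rhs => rw [Pproj.eq_def r s X]
    simp only [Matrix.mul_assoc]
  rw [h1, h2]
  noncomm_ring

end
end
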